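/- For every n ≥ 9, the symmetric function p_{(1^n)} + p_{(2,1^{n−2})} + p_{(2,2,1^{n−4})} + p_{(3,1^{n−3})} + p_{(n−2,1,1)} is Schur-positive; that is, its expansion in the Schur basis {s_λ : λ ⊢ n} has nonnegative coefficients. -/

import Mathlib

open Finset MvPolynomial

/-- A partition of `n`, represented as a weakly decreasing list of positive
integers summing to `n`. -/
def IsPartitionOf (n : ℕ) (l : List ℕ) : Prop :=
  l.Pairwise (· ≥ ·) ∧ (∀ x ∈ l, 0 < x) ∧ l.sum = n

/-- `T : ℕ → ℕ → ℕ` is a semistandard Young tableau of shape `l`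
(rows weakly increase, columns strictly increase, entries are `0` outside
of the diagram; entries are 0-indexed, so entry value `k` stands for the
letter `k+1`). -/
def IsSSYT (l : List ℕ) (T : ℕ → ℕ → ℕ) : Prop :=
  (∀ i j1 j2, j1 ≤ j2 → j2 < l.getD i 0 → T i j1 ≤ T i j2) ∧
  (∀ i1 i2 j, i1 < i2 → j < l.getD i2 0 → T i1 j < T i2 j) ∧
  (∀ i j, l.getD i 0 ≤ j → T i j = 0)

/-- The tableau `T` of shape `l` has content `ν`: for every `k`, the number of
cells of the diagram of `l` whose entry is `k` equals the `(k+1)`-st part of `ν`. -/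
def HasContent (l : List ℕ) (T : ℕ → ℕ → ℕ) (ν : List ℕ) : Prop :=
  ∀ k, Nat.card {c : ℕ × ℕ // c.2 < l.getD c.1 0 ∧ T c.1 c.2 = k} = ν.getD k 0

/-- The Kostka number `K_{l,ν}`: the number of semistandard Young tableaux of
shape `l` and content `ν`. -/
noncomputable def kostka (l ν : List ℕ) : ℕ :=
  Nat.card {T : ℕ → ℕ → ℕ // IsSSYT l T ∧ HasContent l T ν}

/-- `f^λ`, the number of standard Young tableaux of shape `l`. -/
noncomputable def fSYT (l : List ℕ) : ℕ := kostka l (List.replicate l.sum 1)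

/-- Dominance order: all partial sums of `l` are at most those of `m`. -/
def DomLE (l m : List ℕ) : Prop := ∀ k, (l.take k).sum ≤ (m.take k).sum

/-- The standard immersion order: dominance together with `f^λ ≤ f^μ`. -/
def StdLE (l m : List ℕ) : Prop := DomLE l m ∧ fSYT l ≤ fSYT m

/-- Strict standard immersion order. -/
def StdLT (l m : List ℕ) : Prop := StdLE l m ∧ l ≠ m

/-- `m` covers `l` in the standard immersion poset on partitions of `n`. -/
def StdCovBy (n : ℕ) (l m : List ℕ) : Prop :=
  StdLT l m ∧ ∀ ν, IsPartitionOf n ν → StdLT l ν → ¬ StdLT ν m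

/-- `l` is a maximal element of the standard immersion poset on partitions of `n`. -/
def StdMaximal (n : ℕ) (l : List ℕ) : Prop :=
  ∀ m, IsPartitionOf n m → m ≠ l → ¬ StdLE l m

/-- The immersion order on partitions of `n`: `l ≤_I m` iff
`K_{l,α} ≤ K_{m,α}` for every partition `α` of `n`. -/
def ImmersionLE (n : ℕ) (l m : List ℕ) : Prop :=
  ∀ ν, IsPartitionOf n ν → kostka l ν ≤ kostka m ν

/-- Strict immersion order. -/
def ImmersionLT (n : ℕ) (l m : List ℕ) : Prop := ImmersionLE n l m ∧ l ≠ m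

/-- `m` covers `l` in the immersion poset on partitions of `n`. -/
def ImmersionCovBy (n : ℕ) (l m : List ℕ) : Prop :=
  ImmersionLT n l m ∧ ∀ ν, IsPartitionOf n ν → ImmersionLT n l ν → ¬ ImmersionLT n ν m

/-- The monomial symmetric polynomial `m_l` in `N` variables associated to a
partition `l` of `n`: the sum of `x^α` over all distinct exponent vectors `α`
whose nonzero entries are a rearrangement of the parts of `l`. -/
noncomputable def msymmList (N n : ℕ) (l : List ℕ) : MvPolynomial (Fin N) ℤ :=
  ∑ α ∈ (Fintype.piFinset fun _ : Fin N => Finset.range (n + 1)) |>.filter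
      (fun α => Multiset.filter (fun x => x ≠ 0) (Multiset.map α Finset.univ.val)
        = (↑l : Multiset ℕ)),
    MvPolynomial.monomial (Finsupp.equivFunOnFinite.symm α) (1 : ℤ)

/-- The parts of a `Nat.Partition` listed in weakly decreasing order. -/
def sortedParts {n : ℕ} (μ : Nat.Partition n) : List ℕ :=
  (μ.parts.sort (· ≤ ·)).reverse

/-- The Schur polynomial in `N` variables of a partition `l` of `n`, defined via
`s_l = ∑_{μ ⊢ n} K_{l,μ} m_μ`. -/
noncomputable def schurP (N n : ℕ) (l : List ℕ) : MvPolynomial (Fin N) ℤ :=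
  ∑ μ : Nat.Partition n, (kostka l (sortedParts μ) : ℤ) • msymmList N n (sortedParts μ)

/-- A symmetric polynomial of degree `n` is monomial-positive if it is a
nonnegative integer combination of the monomial symmetric polynomials `m_μ`, `μ ⊢ n`. -/
def MonomialPos (N n : ℕ) (f : MvPolynomial (Fin N) ℤ) : Prop :=
  ∃ c : Nat.Partition n → ℕ,
    f = ∑ μ : Nat.Partition n, (c μ : ℤ) • msymmList N n (sortedParts μ)

/-- The power sum symmetric polynomial `p_l = p_{l_1} p_{l_2} ⋯` in `N` variables. -/
noncomputable def powerSum (N : ℕ) (l : List ℕ) : MvPolynomial (Fin N) ℤ :=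
  (l.map fun r => ∑ i : Fin N, (X i : MvPolynomial (Fin N) ℤ) ^ r).prod


/-- Gelfand-Tsetlin recursion for Schur polynomials. -/
noncomputable def SP {R : Type*} [CommRing R] : (N : ℕ) → (Fin N → ℕ) → (Fin N → R) → R
  | 0, _, _ => 1
  | N + 1, lam, x =>
    ∑ mu ∈ Fintype.piFinset (fun j : Fin N => Finset.Icc (lam j.succ) (lam j.castSucc)),
      x (Fin.last N) ^ ((∑ i, lam i) - ∑ i, mu i) * SP N mu (fun i => x i.castSucc)

/-- shift by the staircase -/
def sh {N : ℕ} (lam : Fin N → ℕ) : Fin N → ℕ := fun i => lam i + (N - 1 - i)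

/-- the alternant -/
noncomputable def alt {R : Type*} [CommRing R] {N : ℕ} (b : Fin N → ℕ) (x : Fin N → R) : R :=
  Matrix.det (Matrix.of fun i j => x i ^ b j)

lemma geom_aux {R : Type*} [CommRing R] (x y : R) (m a b : ℕ) (h : a ≤ b) :
    x ^ (b + (m + 1)) - y ^ (b + 1 - a) * x ^ (a + m) =
      (x - y) * ∑ k ∈ Finset.Icc a b, x ^ (k + m) * y ^ (b - k) := by
  induction b, h using Nat.le_induction with
  | base =>
    simp
    ring
  | succ b hab ih =>
    rw [← Finset.insert_Icc_right_eq_Icc_add_one (by omega), Finset.sum_insert (by simp)]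
    have h1 : ∑ k ∈ Finset.Icc a b, x ^ (k + m) * y ^ (b + 1 - k)
        = y * ∑ k ∈ Finset.Icc a b, x ^ (k + m) * y ^ (b - k) := by
      rw [Finset.mul_sum]
      refine Finset.sum_congr rfl fun k hk => ?_
      rw [Finset.mem_Icc] at hk
      rw [show b + 1 - k = (b - k) + 1 by omega]
      ring
    have h2 : y ^ (b + 1 + 1 - a) = y * y ^ (b + 1 - a) := by
      rw [show b + 1 + 1 - a = (b + 1 - a) + 1 by omega]
      ring
    rw [h1, h2, mul_add, mul_left_comm (x - y) y, ← ih]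
    simp
    ring

lemma alt_step {R : Type*} [CommRing R] {N : ℕ} (lam : Fin (N + 1) → ℕ) (hl : Antitone lam)
    (x : Fin (N + 1) → R) :
    alt (sh lam) x = (∏ i : Fin N, (x i.castSucc - x (Fin.last N))) *
      ∑ mu ∈ Fintype.piFinset (fun j : Fin N => Finset.Icc (lam j.succ) (lam j.castSucc)),
        x (Fin.last N) ^ ((∑ i, lam i) - ∑ i, mu i) * alt (sh mu) (fun i => x i.castSucc) := by
  have hstep : ∀ j : Fin N, lam j.succ ≤ lam j.castSucc := fun j => hl (Fin.castSucc_lt_succ).le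
  set y := x (Fin.last N) with hy
  -- column operations
  let B : Matrix (Fin (N + 1)) (Fin (N + 1)) R := Matrix.of fun i j =>
    Fin.lastCases (motive := fun _ => R) (x i ^ lam (Fin.last N))
      (fun j => (x i - y) * ∑ k ∈ Finset.Icc (lam j.succ) (lam j.castSucc),
        x i ^ (k + (N - 1 - j)) * y ^ (lam j.castSucc - k)) j
  have h1 : alt (sh lam) x = B.det := by
    unfold alt
    rw [← Matrix.det_submatrix_equiv_self Fin.revPerm, ← Matrix.det_submatrix_equiv_self Fin.revPerm B]
    refine Matrix.det_eq_of_forall_col_eq_smul_add_pred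
      (fun j => y ^ (lam j.rev.castSucc + 1 - lam j.rev.succ)) ?_ ?_
    · intro i
      simp [B, sh]
    · intro i j
      simp only [Matrix.submatrix_apply, Matrix.of_apply, Fin.revPerm_apply, Fin.rev_succ,
        Fin.rev_castSucc, B, Fin.lastCases_castSucc]
      rw [← geom_aux _ _ _ _ _ (hstep j.rev)]
      have : ((j.rev : Fin N) : ℕ) < N := j.rev.2
      simp only [sh, Fin.val_castSucc, Fin.val_succ]
      rw [show N + 1 - 1 - (j.rev : ℕ) = N - 1 - (j.rev : ℕ) + 1 by omega,
        show N + 1 - 1 - ((j.rev : ℕ) + 1) = N - 1 - (j.rev : ℕ) by omega]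
      ring
  rw [h1, Matrix.det_succ_row B (Fin.last N), Finset.sum_eq_single (Fin.last N)]
  rotate_left
  · intro b _ hb
    obtain ⟨j, rfl⟩ := Fin.exists_castSucc_eq.2 hb
    simp [B, hy]
  · simp
  have h2 : B.submatrix (Fin.last N).succAbove (Fin.last N).succAbove =
      Matrix.of fun i j => (x i.castSucc - y) * (Matrix.of fun (i j : Fin N) =>
        ∑ k ∈ Finset.Icc (lam j.succ) (lam j.castSucc),
        x i.castSucc ^ (k + (N - 1 - j)) * y ^ (lam j.castSucc - k)) i j := by
    ext i j
    simp [B]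
  rw [h2, Matrix.det_mul_column, Matrix.det_apply']
  have h3 : B (Fin.last N) (Fin.last N) = y ^ lam (Fin.last N) := by simp [B, hy]
  rw [h3]
  rw [Even.neg_one_pow (by simp), one_mul, mul_left_comm]
  congr 1
  simp only [Matrix.of_apply, Finset.prod_univ_sum, Finset.mul_sum]
  rw [Finset.sum_comm]
  refine Finset.sum_congr rfl fun mu hmu => ?_
  simp only [alt, Matrix.det_apply', Finset.mul_sum]
  refine Finset.sum_congr rfl fun σ _ => ?_
  rw [Finset.prod_mul_distrib, Finset.prod_pow_eq_pow_sum]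
  simp only [Matrix.of_apply, sh]
  have h4 : (∑ i, lam i) - ∑ i, mu i = lam (Fin.last N) + ∑ i : Fin N, (lam i.castSucc - mu i) := by
    rw [Fin.sum_univ_castSucc, Finset.sum_tsub_distrib]
    · have : ∑ i, mu i ≤ ∑ i : Fin N, lam i.castSucc := by
        refine Finset.sum_le_sum fun i _ => ?_
        have := Fintype.mem_piFinset.1 hmu i
        rw [Finset.mem_Icc] at this
        exact this.2
      omega
    · intro i _
      have := Fintype.mem_piFinset.1 hmu i
      rw [Finset.mem_Icc] at this
      exact this.2
  rw [h4, pow_add]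
  ring

theorem alt_eq {R : Type*} [CommRing R] : ∀ (N : ℕ) (lam : Fin N → ℕ) (_ : Antitone lam)
    (x : Fin N → R), alt (sh lam) x = alt (sh 0) x * SP N lam x := by
  intro N
  induction N with
  | zero => intro lam _ x; simp [alt, SP]
  | succ N ih =>
    intro lam hl x
    rw [alt_step lam hl, alt_step 0 (fun _ _ _ => le_rfl)]
    have h0 : Fintype.piFinset (fun j : Fin N => Finset.Icc ((0 : Fin (N+1) → ℕ) j.succ)
        ((0 : Fin (N+1) → ℕ) j.castSucc)) = {0} := by
      ext f
      simp [funext_iff]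
    rw [h0, Finset.sum_singleton, SP, mul_assoc]
    congr 1
    rw [Finset.mul_sum]
    refine Finset.sum_congr rfl fun mu hmu => ?_
    rw [ih mu]
    · simp
      ring
    · have hm : ∀ i, lam i.succ ≤ mu i ∧ mu i ≤ lam i.castSucc := fun i => by
        simpa using Fintype.mem_piFinset.1 hmu i
      intro i j hij
      rcases hij.eq_or_lt with rfl | hij
      · exact le_rfl
      · refine (hm j).2.trans (le_trans (hl ?_) (hm i).1)
        rw [Fin.le_def]; simpa using hij


/-- Number of Gelfand-Tsetlin patterns with given top row and content. -/
def gtCount : (N : ℕ) → (Fin N → ℕ) → (ℕ → ℕ) → ℕ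
  | 0, _, _ => 1
  | N + 1, lam, a =>
    ∑ mu ∈ Fintype.piFinset (fun j : Fin N => Finset.Icc (lam j.succ) (lam j.castSucc)),
      if ∑ i, lam i = ∑ i, mu i + a N then gtCount N mu a else 0

/-- extension by zero -/
def extz {N : ℕ} (lam : Fin N → ℕ) : ℕ → ℕ := fun i => if h : i < N then lam ⟨i, h⟩ else 0

def IsTab (N : ℕ) (L a : ℕ → ℕ) (T : ℕ → ℕ → ℕ) : Prop :=
  (∀ i j1 j2, j1 ≤ j2 → j2 < L i → T i j1 ≤ T i j2) ∧
  (∀ i1 i2 j, i1 < i2 → j < L i2 → T i1 j < T i2 j) ∧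
  (∀ i j, L i ≤ j → T i j = 0) ∧
  (∀ i j, j < L i → T i j < N) ∧
  (∀ k < N, Nat.card {c : ℕ × ℕ // c.2 < L c.1 ∧ T c.1 c.2 = k} = a k)

def glue (N : ℕ) (L M : ℕ → ℕ) (T : ℕ → ℕ → ℕ) : ℕ → ℕ → ℕ := fun i j =>
  if j < M i then T i j else if j < L i then N else 0

lemma card_skew (K : ℕ) (L M : ℕ → ℕ) (hL : ∀ i, K ≤ i → L i = 0) :
    Nat.card {c : ℕ × ℕ // M c.1 ≤ c.2 ∧ c.2 < L c.1} = ∑ i ∈ Finset.range K, (L i - M i) := by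
  rw [Nat.subtype_card ((Finset.range K).biUnion
    (fun i => (Finset.Ico (M i) (L i)).image (Prod.mk i)))]
  · rw [Finset.card_biUnion]
    · refine Finset.sum_congr rfl fun i _ => ?_
      rw [Finset.card_image_of_injective _ (Prod.mk_right_injective i), Nat.card_Ico]
    · intro i _ j _ hij
      rw [Function.onFun, Finset.disjoint_left]
      rintro ⟨p, q⟩ h1 h2
      simp only [Finset.mem_image, Prod.mk.injEq] at h1 h2
      obtain ⟨_, _, h1, _⟩ := h1
      obtain ⟨_, _, h2, _⟩ := h2
      exact hij (h1.trans h2.symm)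
  · rintro ⟨p, q⟩
    simp only [Finset.mem_biUnion, Finset.mem_image, Prod.mk.injEq, Finset.mem_range, Finset.mem_Ico]
    constructor
    · rintro ⟨i, hi, q', hq, rfl, rfl⟩
      exact hq
    · intro h
      refine ⟨p, ?_, q, h, rfl, rfl⟩
      by_contra hp
      have := hL p (by omega)
      omega

lemma glue_isTab {N : ℕ} {L M a : ℕ → ℕ} {T : ℕ → ℕ → ℕ} (hL : Antitone L)
    (hML : ∀ i, M i ≤ L i) (hLM : ∀ i, L (i + 1) ≤ M i)
    (hc : Nat.card {c : ℕ × ℕ // M c.1 ≤ c.2 ∧ c.2 < L c.1} = a N) (hT : IsTab N M a T) :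
    IsTab (N + 1) L a (glue N L M T) := by
  obtain ⟨h1, h2, h3, h4, h5⟩ := hT
  refine ⟨?_, ?_, ?_, ?_, ?_⟩
  · intro i j1 j2 hj hj2
    unfold glue
    by_cases hA : j2 < M i
    · rw [if_pos hA, if_pos (by omega)]
      exact h1 i j1 j2 hj hA
    · rw [if_neg hA, if_pos hj2]
      by_cases hB : j1 < M i
      · rw [if_pos hB]; exact (h4 i j1 hB).le
      · rw [if_neg hB, if_pos (by omega)]
  · intro i1 i2 j hi hj
    have hA : j < M i1 := lt_of_lt_of_le hj ((hL (by omega : i1 + 1 ≤ i2)).trans (hLM i1))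
    unfold glue
    rw [if_pos hA]
    by_cases hB : j < M i2
    · rw [if_pos hB]; exact h2 i1 i2 j hi hB
    · rw [if_neg hB, if_pos hj]; exact h4 i1 j hA
  · intro i j hj
    unfold glue
    have := hML i
    rw [if_neg (by omega), if_neg (by omega)]
  · intro i j hj
    unfold glue
    split_ifs with hA
    · have := h4 i j hA; omega
    · omega
  · intro k hk
    rcases Nat.lt_succ_iff_lt_or_eq.1 hk with hk | rfl
    · rw [← h5 k hk]
      refine Nat.card_congr (Equiv.subtypeEquivRight ?_)
      rintro ⟨i, j⟩
      simp only [glue]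
      have := hML i
      constructor
      · rintro ⟨hj, hg⟩
        split_ifs at hg with hA
        · exact ⟨hA, hg⟩
        · omega
      · rintro ⟨hj, hg⟩
        rw [if_pos hj]
        exact ⟨by omega, hg⟩
    · rw [← hc]
      refine Nat.card_congr (Equiv.subtypeEquivRight ?_)
      rintro ⟨i, j⟩
      simp only [glue]
      constructor
      · rintro ⟨hj, hg⟩
        refine ⟨?_, hj⟩
        by_contra hA
        rw [if_pos (by omega)] at hg
        have := h4 i j (by omega)
        omega
      · rintro ⟨hA, hj⟩
        rw [if_neg (by omega), if_pos hj]
        exact ⟨hj, rfl⟩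

lemma row_le {N : ℕ} {L a : ℕ → ℕ} {T : ℕ → ℕ → ℕ} (hL : Antitone L) (hT : IsTab N L a T)
    (i j : ℕ) (hj : j < L i) : i ≤ T i j := by
  induction i with
  | zero => omega
  | succ i ih =>
    have := ih (lt_of_lt_of_le hj (hL (Nat.le_succ i)))
    have := hT.2.1 i (i + 1) j (by omega) hj
    omega

lemma exists_unglue {N : ℕ} {L a : ℕ → ℕ} {T : ℕ → ℕ → ℕ} (hL : Antitone L)
    (hT : IsTab (N + 1) L a T) :
    ∃ (M : ℕ → ℕ) (T' : ℕ → ℕ → ℕ), (∀ i, M i ≤ L i) ∧ (∀ i, L (i + 1) ≤ M i) ∧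
      (∀ i, N ≤ i → M i = 0) ∧ IsTab N M a T' ∧ glue N L M T' = T ∧
      Nat.card {c : ℕ × ℕ // M c.1 ≤ c.2 ∧ c.2 < L c.1} = a N := by
  have hrow := row_le hL hT
  obtain ⟨h1, h2, h3, h4, h5⟩ := hT
  have hM : ∀ i, ∃ m, m ≤ L i ∧ ∀ j, j < L i → (T i j < N ↔ j < m) := by
    intro i
    classical
    by_cases hex : ∃ j, j < L i ∧ N ≤ T i j
    · refine ⟨Nat.find hex, (Nat.find_spec hex).1.le, fun j hj => ?_⟩
      constructor
      · intro hlt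
        by_contra hcon
        have := h1 i (Nat.find hex) j (by omega) hj
        have := (Nat.find_spec hex).2
        omega
      · intro hlt
        have := Nat.find_min hex hlt
        by_contra hcon
        exact this ⟨hj, by omega⟩
    · push Not at hex
      exact ⟨L i, le_rfl, fun j hj => ⟨fun _ => hj, fun _ => hex j hj⟩⟩
  choose M hML hMT using hM
  have hLM : ∀ i, L (i + 1) ≤ M i := by
    intro i
    by_contra hcon
    have a1 := h2 i (i + 1) (M i) (by omega) (by omega)
    have a2 := h4 (i + 1) (M i) (by omega)
    have a3 := hL (Nat.le_succ i)
    have := (hMT i (M i) (by simp only [Nat.succ_eq_add_one] at a3; omega)).1 (by omega)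
    omega
  refine ⟨M, fun i j => if j < M i then T i j else 0, hML, hLM, ?_, ?_, ?_, ?_⟩
  · intro i hi
    by_contra hcon
    have a1 := hML i
    have a2 := (hMT i 0 (by omega)).2 (by omega)
    have a3 := hrow i 0 (by omega)
    omega
  · refine ⟨?_, ?_, ?_, ?_, ?_⟩
    · intro i j1 j2 hj hj2
      have := hML i
      simp only
      rw [if_pos hj2, if_pos (by omega)]
      exact h1 i j1 j2 hj (by omega)
    · intro i1 i2 j hi hj
      have b1 := hML i2
      have b2 := hLM i1
      have b3 := hL (by omega : i1 + 1 ≤ i2)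
      simp only
      rw [if_pos hj, if_pos (by omega)]
      exact h2 i1 i2 j hi (by omega)
    · intro i j hj
      simp only
      rw [if_neg (by omega)]
    · intro i j hj
      have := hML i
      simp only
      rw [if_pos hj]
      exact (hMT i j (by omega)).2 hj
    · intro k hk
      rw [← h5 k (by omega)]
      refine Nat.card_congr (Equiv.subtypeEquivRight ?_)
      rintro ⟨i, j⟩
      have := hML i
      simp only
      constructor
      · rintro ⟨hj, hg⟩
        rw [if_pos hj] at hg
        exact ⟨by omega, hg⟩
      · rintro ⟨hj, hg⟩
        have := (hMT i j hj).1 (by omega)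
        rw [if_pos this]
        exact ⟨this, hg⟩
  · funext i j
    unfold glue
    have := hML i
    simp only
    by_cases hA : j < M i
    · rw [if_pos hA, if_pos hA]
    · rw [if_neg hA]
      by_cases hB : j < L i
      · rw [if_pos hB]
        have c1 := h4 i j hB
        have c2 := hMT i j hB
        omega
      · rw [if_neg hB, h3 i j (by omega)]
  · rw [← h5 N (by omega)]
    refine Nat.card_congr (Equiv.subtypeEquivRight ?_)
    rintro ⟨i, j⟩
    simp only
    constructor
    · rintro ⟨hA, hB⟩
      have c1 := h4 i j hB
      have c2 := hMT i j hB
      exact ⟨hB, by omega⟩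
    · rintro ⟨hB, hg⟩
      have c2 := hMT i j hB
      exact ⟨by omega, hB⟩

lemma extz_antitone {N : ℕ} {lam : Fin N → ℕ} (h : Antitone lam) : Antitone (extz lam) := by
  intro i j hij
  unfold extz
  by_cases hj : j < N
  · rw [dif_pos hj, dif_pos (by omega)]
    exact h (by rw [Fin.le_def]; exact hij)
  · rw [dif_neg hj]; exact Nat.zero_le _

lemma glue_inj_aux {N : ℕ} {L M M' a : ℕ → ℕ} {T T' : ℕ → ℕ → ℕ}
    (hT' : IsTab N M' a T')
    (h : glue N L M T = glue N L M' T') (i : ℕ) : M' i ≤ M i ∨ L i < M' i := by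
  by_contra hcon
  push Not at hcon
  have h1 := congrFun (congrFun h i) (M i)
  unfold glue at h1
  rw [if_neg (by omega), if_pos (by omega), if_pos (by omega)] at h1
  have := hT'.2.2.2.1 i (M i) (by omega)
  omega

lemma isTab_count : ∀ (N : ℕ) (lam : Fin N → ℕ) (a : ℕ → ℕ) (_ : Antitone lam),
    Finite {T // IsTab N (extz lam) a T} ∧
      Nat.card {T // IsTab N (extz lam) a T} = gtCount N lam a := by
  intro N
  induction N with
  | zero =>
    intro lam a _
    have hU : Nonempty (Unique {T // IsTab 0 (extz lam) a T}) := by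
      refine ⟨⟨⟨⟨fun _ _ => 0, ?_⟩⟩, ?_⟩⟩
      · simp [IsTab, extz]
      · rintro ⟨T, hT⟩
        apply Subtype.ext
        funext i j
        exact hT.2.2.1 i j (by simp [extz])
    obtain ⟨hU⟩ := hU
    exact ⟨inferInstance, by simp [gtCount]⟩
  | succ N ih =>
    intro lam a hl
    classical
    let P := Fintype.piFinset (fun j : Fin N => Finset.Icc (lam j.succ) (lam j.castSucc))
    let P' := P.filter (fun mu => ∑ i, lam i = ∑ i, mu i + a N)
    have hP : ∀ mu ∈ P, ∀ i, lam i.succ ≤ mu i ∧ mu i ≤ lam i.castSucc := fun mu hmu i => by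
      simpa using Fintype.mem_piFinset.1 hmu i
    have hLa := extz_antitone hl
    have hmono : ∀ mu ∈ P, Antitone mu := by
      intro mu hmu i j hij
      have hm := hP mu hmu
      rcases hij.eq_or_lt with rfl | hij
      · exact le_rfl
      · refine (hm j).2.trans (le_trans (hl ?_) (hm i).1)
        rw [Fin.le_def]; simpa using hij
    have hle : ∀ mu ∈ P, ∀ i, extz mu i ≤ extz lam i := by
      intro mu hmu i
      unfold extz
      split_ifs with h1 h2
      · exact (hP mu hmu ⟨i, h1⟩).2
      · omega
      · omega
      · omega
    have hle2 : ∀ mu ∈ P, ∀ i, extz lam (i + 1) ≤ extz mu i := by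
      intro mu hmu i
      unfold extz
      split_ifs with h1 h2
      · exact (hP mu hmu ⟨i, h2⟩).1
      · omega
      · omega
      · omega
    have hcard : ∀ mu : Fin N → ℕ, (∀ i, extz mu i ≤ extz lam i) →
        Nat.card {c : ℕ × ℕ // extz mu c.1 ≤ c.2 ∧ c.2 < extz lam c.1} + ∑ i, mu i = ∑ i, lam i := by
      intro mu hmu
      rw [card_skew (N + 1) _ _ (fun i hi => by simp [extz]; omega)]
      have e1 : ∑ i, lam i = ∑ i ∈ Finset.range (N + 1), extz lam i := by
        rw [Finset.sum_range]; refine Finset.sum_congr rfl fun i _ => ?_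
        unfold extz
        rw [dif_pos i.2]
      have e2 : ∑ i, mu i = ∑ i ∈ Finset.range (N + 1), extz mu i := by
        rw [Finset.sum_range_succ, Finset.sum_range]
        simp [extz]
      rw [e1, e2, ← Finset.sum_add_distrib]
      refine Finset.sum_congr rfl fun i _ => ?_
      have := hmu i
      omega
    let F : (Σ mu : P', {T // IsTab N (extz mu.1) a T}) → {T // IsTab (N + 1) (extz lam) a T} :=
      fun p => ⟨glue N (extz lam) (extz p.1.1) p.2.1, by
        have hm := Finset.mem_filter.1 p.1.2
        refine glue_isTab hLa (hle _ hm.1) (hle2 _ hm.1) ?_ p.2.2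
        have := hcard p.1.1 (hle _ hm.1)
        omega⟩
    have hF : Function.Bijective F := by
      constructor
      · rintro ⟨⟨mu, hmu⟩, T, hT⟩ ⟨⟨mu', hmu'⟩, T', hT'⟩ h
        change IsTab N (extz mu) a T at hT
        change IsTab N (extz mu') a T' at hT'
        have h : glue N (extz lam) (extz mu) T = glue N (extz lam) (extz mu') T' :=
          congrArg Subtype.val h
        have hm := (Finset.mem_filter.1 hmu).1
        have hm' := (Finset.mem_filter.1 hmu').1
        have : mu = mu' := by
          funext i
          have a1 := glue_inj_aux (L := extz lam) (M := extz mu) (M' := extz mu') hT' h i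
          have a2 := glue_inj_aux (L := extz lam) (M := extz mu') (M' := extz mu) hT h.symm i
          have a3 := hle mu hm i
          have a4 := hle mu' hm' i
          have e : extz mu i = extz mu' i := by omega
          simpa [extz] using e
        subst this
        have : T = T' := by
          funext i j
          by_cases hj : j < extz mu i
          · have := congrFun (congrFun h i) j
            unfold glue at this
            rwa [if_pos hj, if_pos hj] at this
          · rw [hT.2.2.1 i j (by omega), hT'.2.2.1 i j (by omega)]
        subst this
        rfl
      · rintro ⟨T, hT⟩
        obtain ⟨M, T', m1, m2, m3, m4, m5, m6⟩ := exists_unglue hLa hT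
        have hext : extz (fun i : Fin N => M i) = M := by
          funext i
          unfold extz
          split_ifs with h
          · rfl
          · exact (m3 i (by omega)).symm
        have hmem : (fun i : Fin N => M i) ∈ P' := by
          refine Finset.mem_filter.2 ⟨?_, ?_⟩
          · refine Fintype.mem_piFinset.2 fun i => Finset.mem_Icc.2 ⟨?_, ?_⟩
            · have := m2 i
              unfold extz at this
              rw [dif_pos (by omega)] at this
              exact this
            · have := m1 i
              unfold extz at this
              rw [dif_pos (by omega)] at this
              exact this
          · have := hcard (fun i : Fin N => M i) (by rw [hext]; exact m1)
            rw [hext] at this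
            simp only at this ⊢
            omega
        refine ⟨⟨⟨_, hmem⟩, ⟨T', by simpa only [hext] using m4⟩⟩, ?_⟩
        apply Subtype.ext
        simp only [F, hext, m5]
    have hfin : ∀ mu : P', Finite {T // IsTab N (extz mu.1) a T} := fun mu =>
      (ih mu.1 a (hmono _ (Finset.mem_filter.1 mu.2).1)).1
    refine ⟨Finite.of_surjective F hF.2, ?_⟩
    rw [← Nat.card_eq_of_bijective F hF, Nat.card_sigma]
    rw [gtCount, ← Finset.sum_filter]
    rw [← Finset.sum_coe_sort P' (fun mu => gtCount N mu a)]
    refine Finset.sum_congr rfl fun mu _ => ?_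
    exact (ih mu.1 a (hmono _ (Finset.mem_filter.1 mu.2).1)).2

/-- Kostka numbers count Gelfand-Tsetlin patterns. -/
theorem kostka_eq_gtCount (N : ℕ) (l nu : List ℕ) (hl : l.Pairwise (· ≥ ·)) (hlN : l.length ≤ N)
    (hnu : nu.length ≤ N) :
    kostka l nu = gtCount N (fun i : Fin N => l.getD i 0) (fun k => nu.getD k 0) := by
  have hext : extz (fun i : Fin N => l.getD i 0) = fun i => l.getD i 0 := by
    funext i
    unfold extz
    split_ifs with h
    · rfl
    · rw [List.getD_eq_default]; omega
  have hanti : Antitone (fun i : Fin N => l.getD i 0) := by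
    intro i j hij
    by_cases hj : (j : ℕ) < l.length
    · have hi : (i : ℕ) < l.length := lt_of_le_of_lt hij hj
      simp only [List.getD_eq_getElem _ _ hj, List.getD_eq_getElem _ _ hi]
      rcases hij.eq_or_lt with rfl | hij
      · exact le_rfl
      · exact List.pairwise_iff_getElem.1 hl i j hi hj hij
    · simp only [List.getD_eq_default _ _ (not_lt.1 hj)]
      exact Nat.zero_le _
  rw [← (isTab_count N _ _ hanti).2, hext, kostka]
  refine Nat.card_congr (Equiv.subtypeEquivRight fun T => ?_)
  constructor
  · rintro ⟨⟨h1, h2, h3⟩, h4⟩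
    refine ⟨h1, h2, h3, ?_, fun k _ => h4 k⟩
    intro i j hj
    by_contra hcon
    have h5 := h4 (T i j)
    rw [List.getD_eq_default _ _ (by omega)] at h5
    rw [Nat.card_eq_zero] at h5
    rcases h5 with h5 | h5
    · exact h5.elim ⟨(i, j), hj, rfl⟩
    · have hfin : Set.Finite {c : ℕ × ℕ | c.2 < l.getD c.1 0} := by
        refine Set.Finite.subset ((Finset.range l.length ×ˢ Finset.range (l.sum + 1)).finite_toSet) ?_
        rintro ⟨p, q⟩ hpq
        simp only [Set.mem_setOf_eq] at hpq
        have hp : p < l.length := by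
          by_contra hp
          rw [List.getD_eq_default _ _ (by omega)] at hpq
          omega
        rw [List.getD_eq_getElem _ _ hp] at hpq
        have := List.le_sum_of_mem (List.getElem_mem hp)
        simp only [Finset.coe_product, Finset.coe_range, Set.mem_prod, Set.mem_Iio]
        omega
      exact (not_finite_iff_infinite.2 h5) (hfin.subset fun c hc => hc.1)
  · rintro ⟨h1, h2, h3, h4, h5⟩
    refine ⟨⟨h1, h2, h3⟩, fun k => ?_⟩
    by_cases hk : k < N
    · exact h5 k hk
    · rw [List.getD_eq_default _ _ (by omega)]
      rw [Nat.card_eq_zero]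
      left
      refine ⟨?_⟩
      rintro ⟨⟨i, j⟩, hj, hg⟩
      have := h4 i j hj
      simp only at hg
      omega


lemma gtCount_congr : ∀ (N : ℕ) (lam : Fin N → ℕ) (a b : ℕ → ℕ), (∀ k < N, a k = b k) →
    gtCount N lam a = gtCount N lam b := by
  intro N
  induction N with
  | zero => intros; rfl
  | succ N ih =>
    intro lam a b h
    rw [gtCount, gtCount, h N (by omega)]
    refine Finset.sum_congr rfl fun mu _ => ?_
    rw [ih mu a b (fun k hk => h k (by omega))]

lemma gtCount_sum : ∀ (N : ℕ) (lam : Fin N → ℕ) (a : ℕ → ℕ), gtCount N lam a ≠ 0 →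
    ∑ i, lam i = ∑ k ∈ Finset.range N, a k := by
  intro N
  induction N with
  | zero => intros; simp
  | succ N ih =>
    intro lam a h
    rw [gtCount] at h
    obtain ⟨mu, _, hmu⟩ := Finset.exists_ne_zero_of_sum_ne_zero h
    split_ifs at hmu with hs
    · rw [hs, ih mu a hmu, Finset.sum_range_succ]
    · exact absurd rfl hmu

lemma coeff_SP {N : ℕ} : ∀ (M : ℕ) (h : M ≤ N) (lam : Fin M → ℕ) (a : Fin N →₀ ℕ),
    coeff a (SP M lam (fun i => (X (Fin.castLE h i) : MvPolynomial (Fin N) ℤ))) =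
      if ∀ i : Fin N, M ≤ i → a i = 0 then (gtCount M lam (extz a) : ℤ) else 0 := by
  intro M
  induction M with
  | zero =>
    intro h lam a
    simp only [SP, gtCount, coeff_one, Nat.cast_one]
    refine if_congr ?_ rfl rfl
    constructor
    · rintro rfl; simp
    · intro h; ext i; simp [h i (Nat.zero_le _)]
  | succ M ih =>
    intro h lam a
    set m : Fin N := ⟨M, h⟩ with hm
    have hlast : Fin.castLE h (Fin.last M) = m := rfl
    have hcast : ∀ i : Fin M, Fin.castLE h i.castSucc = Fin.castLE (by omega : M ≤ N) i := fun i => rfl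
    rw [SP, coeff_sum, gtCount]
    simp only [hlast, hcast, X_pow_eq_monomial, coeff_monomial_mul', one_mul]
    simp only [ih]
    have key : ∀ mu ∈ Fintype.piFinset (fun j : Fin M => Finset.Icc (lam j.succ) (lam j.castSucc)),
        (if Finsupp.single m ((∑ i, lam i) - ∑ i, mu i) ≤ a then
          if ∀ i : Fin N, M ≤ i → (a - Finsupp.single m ((∑ i, lam i) - ∑ i, mu i)) i = 0 then
            (gtCount M mu (extz ⇑(a - Finsupp.single m ((∑ i, lam i) - ∑ i, mu i))) : ℤ) else 0
          else 0) =
        if ∀ i : Fin N, M + 1 ≤ i → a i = 0 then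
          (((if ∑ i, lam i = ∑ i, mu i + extz a M then gtCount M mu (extz a) else 0) : ℕ) : ℤ)
          else 0 := by
      intro mu hmu
      have hle : ∑ i, mu i ≤ ∑ i, lam i := by
        rw [Fin.sum_univ_castSucc]
        have : ∑ i, mu i ≤ ∑ i : Fin M, lam i.castSucc := by
          refine Finset.sum_le_sum fun i _ => ?_
          have := Fintype.mem_piFinset.1 hmu i
          rw [Finset.mem_Icc] at this
          exact this.2
        omega
      have haM : extz a M = a m := by
        unfold extz; rw [dif_pos]
      rw [haM]
      generalize hk : (∑ i, lam i) - ∑ i, mu i = k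
      have hcong : gtCount M mu (extz ⇑(a - Finsupp.single m k)) = gtCount M mu (extz a) := by
        refine gtCount_congr _ _ _ _ fun j hj => ?_
        unfold extz
        rw [dif_pos (by omega), dif_pos (by omega), Finsupp.tsub_apply, Finsupp.single_apply,
          if_neg, Nat.sub_zero]
        intro hh
        have := congrArg Fin.val hh
        simp only [hm] at this
        omega
      rw [hcong]
      have hvals : ∀ i : Fin N, i ≠ m → (a - Finsupp.single m k) i = a i := by
        intro i hi
        simp [hi.symm]
      have hvalm : (a - Finsupp.single m k) m = a m - k := by simp
      simp only [Finsupp.single_le_iff]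
      by_cases hz : ∀ i : Fin N, M + 1 ≤ i → a i = 0
      · rw [if_pos hz]
        by_cases hs : k = a m
        · rw [if_pos (by omega), if_pos, if_pos (by omega)]
          intro i hi
          by_cases him : i = m
          · rw [him, hvalm]; omega
          · rw [hvals i him]
            refine hz i ?_
            have : (i : ℕ) ≠ M := fun hh => him (Fin.ext hh)
            omega
        · rw [if_neg (c := ∑ i, lam i = _) (by omega)]
          by_cases hka : k ≤ a m
          · rw [if_pos hka, if_neg]
            · rfl
            · intro hh
              have := hh m le_rfl
              omega
          · rw [if_neg hka]; rfl
      · rw [if_neg hz]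
        by_cases hka : k ≤ a m
        · rw [if_pos hka, if_neg]
          intro hh
          apply hz
          intro i hi
          rw [← hh i (by omega), hvals]
          intro him
          have := congrArg Fin.val him
          simp only [hm] at this
          omega
        · rw [if_neg hka]
    rw [Finset.sum_congr rfl key]
    split_ifs
    · push_cast; rfl
    · simp

lemma coeff_SP' {N : ℕ} (lam : Fin N → ℕ) (a : Fin N →₀ ℕ) :
    coeff a (SP N lam (X : Fin N → MvPolynomial (Fin N) ℤ)) = (gtCount N lam (extz a) : ℤ) := by
  have := coeff_SP N le_rfl lam a
  rw [if_pos] at this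
  · exact this
  · intro i hi; omega

lemma map_SP {R S : Type*} [CommRing R] [CommRing S] (f : R →+* S) : ∀ (N : ℕ) (lam : Fin N → ℕ)
    (x : Fin N → R), f (SP N lam x) = SP N lam (fun i => f (x i)) := by
  intro N
  induction N with
  | zero => intros; simp [SP]
  | succ N ih =>
    intro lam x
    simp [SP, map_sum, ih]

lemma alt_perm {R : Type*} [CommRing R] {N : ℕ} (b : Fin N → ℕ) (x : Fin N → R)
    (σ : Equiv.Perm (Fin N)) :
    alt b (fun i => x (σ i)) = (Equiv.Perm.sign σ : ℤ) * alt b x := by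
  unfold alt
  rw [← Matrix.det_permute]
  rfl

lemma alt_ne_zero (N : ℕ) : alt (sh 0) (X : Fin N → MvPolynomial (Fin N) ℤ) ≠ 0 := by
  have h : (Matrix.of fun i j : Fin N => (X i : MvPolynomial (Fin N) ℤ) ^ (sh 0 j)) =
      (Matrix.vandermonde X).submatrix id (Fin.revPerm : Equiv.Perm (Fin N)) := by
    ext1 i j
    simp only [Matrix.of_apply, Matrix.submatrix_apply, Matrix.vandermonde_apply, sh, id,
      Fin.revPerm_apply, Fin.val_rev, Pi.zero_apply]
    congr 1
    omega
  unfold alt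
  rw [h, Matrix.det_permute']
  refine mul_ne_zero ?_ (Matrix.det_vandermonde_ne_zero_iff.2 (X_injective))
  exact_mod_cast (Equiv.Perm.sign (Fin.revPerm : Equiv.Perm (Fin N))).isUnit.ne_zero

lemma SP_symm {N : ℕ} (lam : Fin N → ℕ) (hl : Antitone lam) (σ : Equiv.Perm (Fin N)) :
    rename σ (SP N lam (X : Fin N → MvPolynomial (Fin N) ℤ)) = SP N lam X := by
  have h1 : rename σ (SP N lam (X : Fin N → MvPolynomial (Fin N) ℤ)) =
      SP N lam (fun i => X (σ i)) := by
    have := map_SP (rename σ : MvPolynomial (Fin N) ℤ →ₐ[ℤ] _).toRingHom N lam X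
    simpa using this
  rw [h1]
  apply mul_left_cancel₀ (alt_ne_zero N)
  have h2 := alt_eq N lam hl (fun i => (X (σ i) : MvPolynomial (Fin N) ℤ))
  rw [alt_perm, alt_perm, alt_eq N lam hl, mul_assoc] at h2
  refine (mul_left_cancel₀ ?_ h2).symm
  exact_mod_cast (Equiv.Perm.sign σ).isUnit.ne_zero

lemma coeff_SP_perm {N : ℕ} (lam : Fin N → ℕ) (hl : Antitone lam) (σ : Equiv.Perm (Fin N))
    (a : Fin N → ℕ) :
    coeff (Finsupp.equivFunOnFinite.symm fun i => a (σ i))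
      (SP N lam (X : Fin N → MvPolynomial (Fin N) ℤ)) =
    coeff (Finsupp.equivFunOnFinite.symm a) (SP N lam X) := by
  conv_rhs => rw [← SP_symm lam hl σ]
  rw [← coeff_rename_mapDomain σ σ.injective]
  congr 1
  ext i
  obtain ⟨j, rfl⟩ := σ.surjective i
  rw [Finsupp.mapDomain_apply σ.injective]
  simp

lemma exists_sort {N : ℕ} (a : Fin N → ℕ) : ∃ σ : Equiv.Perm (Fin N), Antitone fun i => a (σ i) := by
  refine ⟨Tuple.sort (fun i => OrderDual.toDual (a i)), ?_⟩
  have := Tuple.monotone_sort (fun i => OrderDual.toDual (a i))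
  intro i j hij
  exact this hij

lemma getD_filter (l : List ℕ) (hl : l.Pairwise (· ≥ ·)) (i : ℕ) :
    (l.filter (fun x => x ≠ 0)).getD i 0 = l.getD i 0 := by
  induction l generalizing i with
  | nil => simp
  | cons x l ih =>
    rw [List.pairwise_cons] at hl
    by_cases hx : x = 0
    · have h0 : ∀ y ∈ x :: l, y = 0 := by
        intro y hy
        rcases List.mem_cons.1 hy with rfl | hy
        · exact hx
        · have := hl.1 y hy; omega
      have h1 : (x :: l).filter (fun x => x ≠ 0) = [] := by
        rw [List.filter_eq_nil_iff]
        intro y hy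
        simp [h0 y hy]
      rw [h1]
      by_cases hi : i < (x :: l).length
      · rw [List.getD_eq_getElem _ _ hi, h0 _ (List.getElem_mem hi)]; simp
      · rw [List.getD_eq_default _ _ (not_lt.1 hi)]; simp
    · rw [List.filter_cons_of_pos (by simpa using hx)]
      cases i with
      | zero => simp
      | succ i => simpa using ih hl.2 i

lemma sorted_eq {N : ℕ} (b : Fin N → ℕ) (hb : Antitone b) (l : List ℕ) (hl : l.Pairwise (· ≥ ·))
    (h : Multiset.filter (fun x => x ≠ 0) (Multiset.map b Finset.univ.val) = (↑l : Multiset ℕ))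
    (i : Fin N) : b i = l.getD i 0 := by
  have h1 : Multiset.map b Finset.univ.val = ↑(List.ofFn b) := by
    rw [Fin.univ_val_map]
  rw [h1, Multiset.filter_coe, Multiset.coe_eq_coe] at h
  have hs : (List.ofFn b).Pairwise (· ≥ ·) := by
    rw [List.pairwise_ofFn]
    intro i j hij
    exact hb hij.le
  have h2 : (List.ofFn b).filter (fun x => x ≠ 0) = l := by
    refine List.Perm.eq_of_pairwise (le := (· ≥ ·)) ?_ (hs.filter _) hl h
    intro a b _ _ h1 h2
    exact le_antisymm h2 h1
  rw [← h2, getD_filter _ hs, List.getD_eq_getElem _ _ (by simp)]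
  simp

lemma sortedParts_coe {n : ℕ} (μ : Nat.Partition n) : (↑(sortedParts μ) : Multiset ℕ) = μ.parts := by
  unfold sortedParts
  rw [← Multiset.coe_reverse, List.reverse_reverse, Multiset.sort_eq]

lemma sortedParts_pairwise {n : ℕ} (μ : Nat.Partition n) : (sortedParts μ).Pairwise (· ≥ ·) := by
  unfold sortedParts
  rw [List.pairwise_reverse]
  exact Multiset.pairwise_sort _ _

lemma sortedParts_sum {n : ℕ} (μ : Nat.Partition n) : (sortedParts μ).sum = n := by
  rw [← Multiset.sum_coe, sortedParts_coe, μ.parts_sum]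

lemma sortedParts_pos {n : ℕ} (μ : Nat.Partition n) : ∀ x ∈ sortedParts μ, 0 < x := by
  intro x hx
  rw [← Multiset.mem_coe, sortedParts_coe] at hx
  exact μ.parts_pos hx

lemma sortedParts_length {n : ℕ} (μ : Nat.Partition n) : (sortedParts μ).length ≤ n := by
  conv_rhs => rw [← sortedParts_sum μ]
  exact List.length_le_sum_of_one_le _ (fun x hx => sortedParts_pos μ x hx)

lemma antitone_getD (N : ℕ) (l : List ℕ) (hl : l.Pairwise (· ≥ ·)) :
    Antitone (fun i : Fin N => l.getD i 0) := by
  intro i j hij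
  by_cases hj : (j : ℕ) < l.length
  · have hi : (i : ℕ) < l.length := lt_of_le_of_lt hij hj
    simp only [List.getD_eq_getElem _ _ hj, List.getD_eq_getElem _ _ hi]
    rcases hij.eq_or_lt with rfl | hij
    · exact le_rfl
    · exact List.pairwise_iff_getElem.1 hl i j hi hj hij
  · simp only [List.getD_eq_default _ _ (not_lt.1 hj)]
    exact Nat.zero_le _

lemma sum_getD (N : ℕ) (l : List ℕ) (h : l.length ≤ N) : ∑ i : Fin N, l.getD i 0 = l.sum := by
  induction l generalizing N with
  | nil => simp
  | cons x l ih =>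
    obtain ⟨N, rfl⟩ : ∃ M, N = M + 1 := ⟨N - 1, by simp at h; omega⟩
    rw [Fin.sum_univ_succ]
    simp only [Fin.val_zero, List.getD_cons_zero, Fin.val_succ, List.getD_cons_succ, List.sum_cons]
    rw [ih N (by simpa using h)]

lemma filter_sum (s : Multiset ℕ) : (s.filter (fun x => x ≠ 0)).sum = s.sum := by
  induction s using Multiset.induction_on with
  | empty => rfl
  | cons x s ih =>
    by_cases hx : x = 0
    · rw [Multiset.filter_cons_of_neg (p := fun x => x ≠ 0) _ (by simpa using hx), ih, hx]; simp
    · rw [Multiset.filter_cons_of_pos (p := fun x => x ≠ 0) _ hx]; simp [ih]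

lemma coeff_msymm {N n : ℕ} (l : List ℕ) (hl : l.sum = n) (a : Fin N → ℕ) :
    coeff (Finsupp.equivFunOnFinite.symm a) (msymmList N n l) =
      if Multiset.filter (fun x => x ≠ 0) (Multiset.map a Finset.univ.val) = (↑l : Multiset ℕ)
        then 1 else 0 := by
  unfold msymmList
  rw [coeff_sum]
  simp only [coeff_monomial, EmbeddingLike.apply_eq_iff_eq]
  rw [Finset.sum_ite_eq']
  refine if_congr ?_ rfl rfl
  rw [Finset.mem_filter]
  constructor
  · exact fun h => h.2
  · intro h
    refine ⟨?_, h⟩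
    rw [Fintype.mem_piFinset]
    intro i
    have h1 : (Multiset.map a Finset.univ.val).sum = n := by
      rw [← filter_sum, h, Multiset.sum_coe, hl]
    have h2 : a i ≤ ∑ i, a i := Finset.single_le_sum (fun _ _ => Nat.zero_le _) (Finset.mem_univ i)
    rw [Finset.mem_range]
    change (∑ i, a i) = n at h1
    omega

theorem schurP_eq {N n : ℕ} (hN : n ≤ N) (l : List ℕ) (hl : l.Pairwise (· ≥ ·))
    (hll : l.length ≤ N) (hsum : l.sum = n) :
    schurP N n l = SP N (fun i : Fin N => l.getD i 0) (X : Fin N → MvPolynomial (Fin N) ℤ) := by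
  have hanti := antitone_getD N l hl
  ext a'
  obtain ⟨a, rfl⟩ := Finsupp.equivFunOnFinite.symm.surjective a'
  unfold schurP
  rw [coeff_sum]
  simp only [coeff_smul, coeff_msymm _ (sortedParts_sum _), smul_eq_mul, sortedParts_coe]
  by_cases ha : ∑ i, a i = n
  · let s := Multiset.map a Finset.univ.val
    let μ : Nat.Partition n := Nat.Partition.ofSums n s ha
    have hμ : μ.parts = s.filter (fun x => x ≠ 0) := rfl
    rw [Finset.sum_eq_single μ]
    · rw [if_pos hμ.symm, mul_one]
      obtain ⟨σ, hσ⟩ := exists_sort a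
      rw [← coeff_SP_perm _ hanti σ, coeff_SP', kostka_eq_gtCount N l _ hl hll
        ((sortedParts_length μ).trans hN)]
      congr 1
      refine gtCount_congr _ _ _ _ fun k hk => ?_
      unfold extz
      rw [dif_pos hk]
      have := sorted_eq (fun i => a (σ i)) hσ (sortedParts μ) (sortedParts_pairwise μ) ?_ ⟨k, hk⟩
      · simpa using this.symm
      · rw [sortedParts_coe, hμ]
        congr 1
        have : Multiset.map (fun i => a (σ i)) univ.val = Multiset.map a (Multiset.map σ univ.val) := by
          rw [Multiset.map_map]; rfl
        rw [this]
        congr 1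
        exact congrArg Finset.val (Finset.map_univ_equiv σ)
    · intro b _ hb
      rw [if_neg, mul_zero]
      intro h
      apply hb
      exact Nat.Partition.ext (h.symm.trans hμ.symm)
    · simp
  · rw [Finset.sum_eq_zero, coeff_SP']
    · symm
      norm_cast
      by_contra hcon
      apply ha
      have := gtCount_sum _ _ _ hcon
      rw [sum_getD N l hll, hsum, Finset.sum_range] at this
      rw [this]
      refine Finset.sum_congr rfl fun i _ => ?_
      simp [extz]
    · intro μ _
      rw [if_neg, mul_zero]
      intro h
      apply ha
      have h1 := congrArg Multiset.sum h
      rw [filter_sum, μ.parts_sum] at h1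
      exact h1


/-- coefficient of `x^b` in the alternant with exponents `β` -/
noncomputable def cbase {N : ℕ} (β b : Fin N → ℕ) : ℤ :=
  Matrix.det (Matrix.of fun i j => if b i = β j then (1 : ℤ) else 0)

lemma coeff_alt {N : ℕ} (β b : Fin N → ℕ) :
    coeff (Finsupp.equivFunOnFinite.symm b) (alt β (X : Fin N → MvPolynomial (Fin N) ℤ)) =
      cbase β b := by
  unfold alt cbase
  rw [Matrix.det_apply', Matrix.det_apply', coeff_sum]
  refine Finset.sum_congr rfl fun σ _ => ?_
  simp only [Matrix.of_apply]
  have h1 : ∏ i, (X (σ i) : MvPolynomial (Fin N) ℤ) ^ β i =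
      monomial (Finsupp.equivFunOnFinite.symm fun i => β (σ.symm i)) 1 := by
    rw [monomial_eq, Finsupp.prod_fintype _ _ (by simp), C_1, one_mul]
    rw [← Equiv.prod_comp σ (fun j => (X j : MvPolynomial (Fin N) ℤ) ^
      (Finsupp.equivFunOnFinite.symm fun i => β (σ.symm i)) j)]
    simp
  rw [h1]
  have h2 : ((Equiv.Perm.sign σ : ℤ) : MvPolynomial (Fin N) ℤ) = C (Equiv.Perm.sign σ : ℤ) := by
    simp
  rw [h2, coeff_C_mul, coeff_monomial, Finset.prod_ite_zero]
  congr 1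
  simp only [Finset.prod_const_one, Finset.mem_univ, true_implies, EmbeddingLike.apply_eq_iff_eq]
  refine if_congr ?_ rfl rfl
  constructor
  · rintro rfl i; simp
  · intro h; funext i; rw [← h]; simp

lemma cbase_ne {N : ℕ} {β b : Fin N → ℕ} (h : cbase β b ≠ 0) :
    ∃ σ : Equiv.Perm (Fin N), ∀ i, b (σ i) = β i := by
  unfold cbase at h
  rw [Matrix.det_apply'] at h
  obtain ⟨σ, _, hσ⟩ := Finset.exists_ne_zero_of_sum_ne_zero h
  refine ⟨σ, fun i => ?_⟩
  have := Finset.prod_ne_zero_iff.1 (right_ne_zero_of_mul hσ) i (Finset.mem_univ i)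
  by_contra hcon
  simp [hcon] at this

lemma cbase_perm {N : ℕ} (β b : Fin N → ℕ) (σ : Equiv.Perm (Fin N)) :
    cbase β (fun i => b (σ i)) = (Equiv.Perm.sign σ : ℤ) * cbase β b := by
  unfold cbase
  exact Matrix.det_permute σ (Matrix.of fun i j => if b i = β j then (1 : ℤ) else 0)

lemma cbase_self {N : ℕ} (b : Fin N → ℕ) (hb : Function.Injective b) : cbase b b = 1 := by
  unfold cbase
  rw [← Matrix.det_one (n := Fin N)]
  congr 1
  ext i j
  simp [Matrix.one_apply, hb.eq_iff]

/-- Characters: coefficient of `x^b` in `a_δ p_l`. -/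
noncomputable def chi {N : ℕ} : List ℕ → (Fin N → ℕ) → ℤ
  | [], b => cbase (sh 0) b
  | r :: l, b => ∑ i, if r ≤ b i then chi l (Function.update b i (b i - r)) else 0

lemma powerSum_cons (N r : ℕ) (l : List ℕ) : powerSum N (r :: l) =
    (∑ i : Fin N, (X i : MvPolynomial (Fin N) ℤ) ^ r) * powerSum N l := by
  simp [powerSum]

lemma coeff_chi {N : ℕ} (l : List ℕ) : ∀ b : Fin N → ℕ,
    coeff (Finsupp.equivFunOnFinite.symm b)
      (alt (sh 0) (X : Fin N → MvPolynomial (Fin N) ℤ) * powerSum N l) = chi l b := by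
  induction l with
  | nil =>
    intro b
    rw [chi, ← coeff_alt]
    simp [powerSum]
  | cons r l ih =>
    intro b
    rw [powerSum_cons, chi, mul_left_comm, Finset.sum_mul, coeff_sum]
    refine Finset.sum_congr rfl fun i _ => ?_
    rw [X_pow_eq_monomial, coeff_monomial_mul', one_mul, ← ih]
    simp only [Finsupp.single_le_iff, Finsupp.equivFunOnFinite_symm_apply_apply]
    congr 2
    ext j
    by_cases hj : j = i
    · subst hj; simp
    · simp [Function.update_of_ne hj, Ne.symm hj]

lemma chi_perm {N : ℕ} (l : List ℕ) (σ : Equiv.Perm (Fin N)) : ∀ b : Fin N → ℕ,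
    chi l (fun i => b (σ i)) = (Equiv.Perm.sign σ : ℤ) * chi l b := by
  induction l with
  | nil => intro b; exact cbase_perm _ _ _
  | cons r l ih =>
    intro b
    rw [chi, chi, Finset.mul_sum, ← Equiv.sum_comp σ (fun i => (Equiv.Perm.sign σ : ℤ) *
      (if r ≤ b i then chi l (Function.update b i (b i - r)) else 0))]
    refine Finset.sum_congr rfl fun i _ => ?_
    split_ifs
    · rw [← ih]
      congr 1
      funext j
      by_cases hj : j = i
      · subst hj; simp
      · rw [Function.update_of_ne hj, Function.update_of_ne (by simpa using hj)]
    · simp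

lemma chi_noninj {N : ℕ} (l : List ℕ) (b : Fin N → ℕ) (hb : ¬ Function.Injective b) :
    chi l b = 0 := by
  simp only [Function.Injective] at hb
  push Not at hb
  obtain ⟨i, j, hij, hne⟩ := hb
  have h := chi_perm l (Equiv.swap i j) b
  have h2 : (fun k => b (Equiv.swap i j k)) = b := by
    funext k
    by_cases h1 : k = i
    · subst h1; simp [hij]
    · by_cases h2 : k = j
      · subst h2; simp [hij]
      · rw [Equiv.swap_apply_of_ne_of_ne h1 h2]
  rw [h2, Equiv.Perm.sign_swap hne] at h
  push_cast at h
  linarith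

lemma sum_update {N : ℕ} (b : Fin N → ℕ) (i : Fin N) (v : ℕ) :
    ∑ j, Function.update b i v j + b i = ∑ j, b j + v := by
  rw [Finset.sum_update_of_mem (Finset.mem_univ i)]
  rw [← Finset.sum_erase_add _ _ (Finset.mem_univ i), Finset.sdiff_singleton_eq_erase]
  omega

lemma chi_sum {N : ℕ} (l : List ℕ) : ∀ b : Fin N → ℕ, chi l b ≠ 0 →
    ∑ i, b i = ∑ i : Fin N, sh 0 i + l.sum := by
  induction l with
  | nil =>
    intro b h
    obtain ⟨σ, hσ⟩ := cbase_ne h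
    rw [← Equiv.sum_comp σ]
    simp [hσ]
  | cons r l ih =>
    intro b h
    rw [chi] at h
    obtain ⟨i, _, hi⟩ := Finset.exists_ne_zero_of_sum_ne_zero h
    split_ifs at hi with hr
    · have h1 := ih _ hi
      have h2 := sum_update b i (b i - r)
      rw [List.sum_cons]
      omega
    · exact absurd rfl hi

lemma chi_shift {N : ℕ} (l : List ℕ) (hl : ∀ r ∈ l, 0 < r) : ∀ (b : Fin N → ℕ) (B : Fin (N + 1) → ℕ)
    (_ : B (Fin.last N) = 0) (_ : ∀ i : Fin N, B i.castSucc = b i + 1), chi l B = chi l b := by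
  induction l with
  | nil =>
    intro b B h0 hB
    simp only [chi, cbase]
    rw [Matrix.det_succ_row _ (Fin.last N), Finset.sum_eq_single (Fin.last N)]
    · simp only [Matrix.of_apply, h0]
      rw [Even.neg_one_pow (by simp), if_pos (by simp [sh]), one_mul, one_mul]
      congr 1
      ext i j
      simp only [Matrix.submatrix_apply, Matrix.of_apply, Fin.succAbove_last, hB, sh,
        Pi.zero_apply, Fin.val_castSucc]
      refine if_congr ?_ rfl rfl
      have := j.2
      omega
    · intro j _ hj
      obtain ⟨j, rfl⟩ := Fin.exists_castSucc_eq.2 hj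
      simp only [Matrix.of_apply, h0]
      rw [if_neg]
      · simp
      · simp [sh]; omega
    · simp
  | cons r l ih =>
    intro b B h0 hB
    have hr : 0 < r := hl r (by simp)
    rw [chi, chi, Fin.sum_univ_castSucc, h0, if_neg (by omega), add_zero]
    refine Finset.sum_congr rfl fun i _ => ?_
    rw [hB]
    by_cases h1 : r ≤ b i
    · rw [if_pos h1, if_pos (by omega)]
      refine ih (fun r hr => hl r (by simp [hr])) _ _ ?_ ?_
      · rw [Function.update_of_ne (Fin.castSucc_lt_last i).ne', h0]
      · intro j
        by_cases hj : j = i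
        · subst hj; simp; omega
        · rw [Function.update_of_ne hj, Function.update_of_ne (by simpa using hj), hB]
    · rw [if_neg h1]
      split_ifs with h2
      · apply chi_noninj
        intro hinj
        have : i.castSucc = Fin.last N := by
          apply hinj
          rw [Function.update_of_ne (Fin.castSucc_lt_last i).ne', h0]
          simp; omega
        exact (Fin.castSucc_lt_last i).ne this
      · rfl

lemma chi_congr_perm {N : ℕ} {l l' : List ℕ} (h : l.Perm l') (b : Fin N → ℕ) :
    chi l b = chi l' b := by
  rw [← coeff_chi, ← coeff_chi]
  have : powerSum N l = powerSum N l' := (h.map _).prod_eq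
  rw [this]

/-! ### upper bound -/

def sqs {N : ℕ} (b : Fin N → ℕ) : ℤ := ∑ i, (b i : ℤ) ^ 2

lemma sqs_update {N : ℕ} (b : Fin N → ℕ) (i : Fin N) (v : ℕ) :
    sqs (Function.update b i v) = sqs b - (b i : ℤ) ^ 2 + (v : ℤ) ^ 2 := by
  unfold sqs
  rw [← Finset.sum_erase_add _ _ (Finset.mem_univ i),
    ← Finset.sum_erase_add (a := i) _ (fun i => (b i : ℤ) ^ 2) (Finset.mem_univ i)]
  have : ∑ x ∈ Finset.univ.erase i, ((Function.update b i v x : ℕ) : ℤ) ^ 2 =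
      ∑ x ∈ Finset.univ.erase i, (b x : ℤ) ^ 2 := by
    refine Finset.sum_congr rfl fun j hj => ?_
    rw [Function.update_of_ne (Finset.ne_of_mem_erase hj)]
  rw [this]
  simp

lemma chi_bound {N : ℕ} (l : List ℕ) (r : ℕ) (hr : 0 < r) (Qs : Finset ℤ) (B : ℤ) (hB0 : 0 ≤ B)
    (hB : ∀ b : Fin N → ℕ, |chi l b| ≤ B) (hQ : ∀ b : Fin N → ℕ, chi l b ≠ 0 → sqs b ∈ Qs)
    (b : Fin N → ℕ) : |chi (r :: l) b| ≤ Qs.card * B := by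
  classical
  by_cases hb : Function.Injective b
  · rw [chi]
    set I := Finset.univ.filter
      (fun i => r ≤ b i ∧ chi l (Function.update b i (b i - r)) ≠ 0) with hI
    have h1 : (∑ i, if r ≤ b i then chi l (Function.update b i (b i - r)) else 0) =
        ∑ i ∈ I, chi l (Function.update b i (b i - r)) := by
      rw [hI, Finset.sum_filter]
      refine Finset.sum_congr rfl fun i _ => ?_
      by_cases h1 : r ≤ b i <;> by_cases h2 : chi l (Function.update b i (b i - r)) = 0 <;>
        simp [h1, h2]
    rw [h1]
    have h2 : I.card ≤ Qs.card := by
      refine Finset.card_le_card_of_injOn (fun i => sqs (Function.update b i (b i - r))) ?_ ?_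
      · intro i hi
        exact hQ _ (Finset.mem_filter.1 hi).2.2
      · intro i hi j hj hij
        have hi := (Finset.mem_filter.1 hi).2.1
        have hj := (Finset.mem_filter.1 hj).2.1
        simp only [sqs_update] at hij
        push_cast [hi, hj] at hij
        apply hb
        have h3 : (r : ℤ) * (b i - b j) = 0 := by nlinarith
        have h4 : (r : ℤ) ≠ 0 := by exact_mod_cast hr.ne'
        have := (mul_eq_zero.1 h3).resolve_left h4
        have h5 : (b i : ℤ) = b j := by linarith
        exact_mod_cast h5
    calc |∑ i ∈ I, chi l (Function.update b i (b i - r))|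
        ≤ ∑ i ∈ I, |chi l (Function.update b i (b i - r))| := Finset.abs_sum_le_sum_abs _ _
      _ ≤ ∑ i ∈ I, B := Finset.sum_le_sum fun i _ => hB _
      _ = I.card * B := by simp
      _ ≤ Qs.card * B := by
        apply mul_le_mul_of_nonneg_right _ hB0
        exact_mod_cast h2
  · rw [chi_noninj _ _ hb]
    simp only [abs_zero]
    positivity

lemma chi_cons_ne {N : ℕ} {l : List ℕ} {r : ℕ} {b : Fin N → ℕ} (h : chi (r :: l) b ≠ 0) :
    Function.Injective b ∧ ∃ i, r ≤ b i ∧ chi l (Function.update b i (b i - r)) ≠ 0 := by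
  constructor
  · by_contra hcon
    exact h (chi_noninj _ _ hcon)
  · rw [chi] at h
    obtain ⟨i, _, hi⟩ := Finset.exists_ne_zero_of_sum_ne_zero h
    split_ifs at hi with hr
    · exact ⟨i, hr, hi⟩
    · exact absurd rfl hi

lemma chi_nil_ne {N : ℕ} {b : Fin N → ℕ} (h : chi [] b ≠ 0) :
    (∀ v, (∃ i, b i = v) ↔ v < N) ∧ sqs b = sqs (sh 0 : Fin N → ℕ) := by
  obtain ⟨σ, hσ⟩ := cbase_ne h
  constructor
  · intro v
    constructor
    · rintro ⟨i, rfl⟩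
      have := hσ (σ.symm i)
      rw [Equiv.apply_symm_apply] at this
      have hlt := (σ.symm i).2
      rw [this]
      simp only [sh, Pi.zero_apply]
      omega
    · intro hv
      refine ⟨σ ⟨N - 1 - v, by omega⟩, ?_⟩
      rw [hσ]
      simp only [sh, Pi.zero_apply]
      omega
  · unfold sqs
    rw [← Equiv.sum_comp σ]
    simp [hσ]

lemma sh0_inj {N : ℕ} : Function.Injective (sh 0 : Fin N → ℕ) := by
  intro i j h
  simp only [sh, Pi.zero_apply] at h
  ext
  have := i.2
  have := j.2
  omega

lemma chi_nil_abs {N : ℕ} (b : Fin N → ℕ) : |chi [] b| ≤ 1 := by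
  by_cases h : chi [] b = 0
  · rw [h]; simp
  · obtain ⟨σ, hσ⟩ := cbase_ne h
    have h1 := cbase_perm (sh 0) b σ
    rw [show (fun i => b (σ i)) = sh 0 from funext hσ, cbase_self _ sh0_inj] at h1
    have h2 := congrArg abs h1
    rw [abs_mul] at h2
    rcases Int.units_eq_one_or (Equiv.Perm.sign σ) with h3 | h3 <;> rw [h3] at h2 <;>
      simp at h2 <;> rw [chi, ← h2]

lemma chi_one_ne {N : ℕ} (hN : 2 ≤ N) {b : Fin N → ℕ} (h : chi [1] b ≠ 0) :
    (∀ v, (∃ i, b i = v) ↔ v = N ∨ v < N - 1) ∧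
      sqs b = sqs (sh 0 : Fin N → ℕ) + 2 * N - 1 := by
  obtain ⟨hinj, i, hi, hne⟩ := chi_cons_ne h
  obtain ⟨h1, h2⟩ := chi_nil_ne hne
  have hupd : ∀ j, j ≠ i → Function.update b i (b i - 1) j = b j := fun j hj =>
    Function.update_of_ne hj _ _
  have hupi : Function.update b i (b i - 1) i = b i - 1 := Function.update_self _ _ _
  have hbi : b i = N := by
    have h3 := (h1 (b i - 1)).1 ⟨i, hupi⟩
    by_contra hcon
    obtain ⟨j, hj⟩ := (h1 (b i)).2 (by omega)
    by_cases hji : j = i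
    · subst hji; omega
    · rw [hupd j hji] at hj
      exact hji (hinj hj)
  constructor
  · intro v
    constructor
    · rintro ⟨j, rfl⟩
      by_cases hji : j = i
      · subst hji; left; exact hbi
      · right
        have h3 := (h1 (b j)).1 ⟨j, hupd j hji⟩
        by_contra hcon
        have h5 : Function.update b i (b i - 1) j = Function.update b i (b i - 1) i := by
          rw [hupd j hji, hupi]; omega
        have h6 : Function.Injective (Function.update b i (b i - 1)) := by
          by_contra hc
          exact hne (chi_noninj _ _ hc)
        exact hji (h6 h5)
    · rintro (rfl | hv)
      · exact ⟨i, hbi⟩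
      · obtain ⟨j, hj⟩ := (h1 v).2 (by omega)
        refine ⟨j, ?_⟩
        rw [← hj, hupd]
        rintro rfl
        omega
  · rw [sqs_update, hbi] at h2
    push_cast [show 1 ≤ N by omega] at h2
    linarith

lemma chi_two_ne {N : ℕ} (hN : 2 ≤ N) {b : Fin N → ℕ} (h : chi [1, 1] b ≠ 0) :
    sqs b ∈ ({sqs (sh 0 : Fin N → ℕ) + 4 * N, sqs (sh 0 : Fin N → ℕ) + 4 * N - 4} : Finset ℤ) := by
  obtain ⟨hinj, i, hi, hne⟩ := chi_cons_ne h
  obtain ⟨h1, h2⟩ := chi_one_ne hN hne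
  have hupd : ∀ j, j ≠ i → Function.update b i (b i - 1) j = b j := fun j hj =>
    Function.update_of_ne hj _ _
  have hupi : Function.update b i (b i - 1) i = b i - 1 := Function.update_self _ _ _
  have hbi : b i = N + 1 ∨ b i = N - 1 := by
    have h3 := (h1 (b i - 1)).1 ⟨i, hupi⟩
    by_contra hcon
    obtain ⟨j, hj⟩ := (h1 (b i)).2 (by omega)
    by_cases hji : j = i
    · subst hji; omega
    · rw [hupd j hji] at hj
      exact hji (hinj hj)
  rw [sqs_update] at h2
  simp only [Finset.mem_insert, Finset.mem_singleton]
  rcases hbi with hbi | hbi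
  · left
    rw [hbi] at h2
    push_cast at h2
    linarith
  · right
    rw [hbi, show N - 1 - 1 = N - 2 by omega] at h2
    push_cast [show 1 ≤ N by omega, hN] at h2
    linarith

lemma chi_upper {N : ℕ} (hN : 2 ≤ N) (r : ℕ) (hr : 0 < r) (b : Fin N → ℕ) :
    |chi [r, 1, 1] b| ≤ 2 := by
  have h1 : ∀ b : Fin N → ℕ, |chi [1] b| ≤ 1 := fun b => by
    have := chi_bound [] 1 one_pos {sqs (sh 0 : Fin N → ℕ)} 1 zero_le_one chi_nil_abs
      (fun b hb => by simp [(chi_nil_ne hb).2]) b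
    simpa using this
  have h2 : ∀ b : Fin N → ℕ, |chi [1, 1] b| ≤ 1 := fun b => by
    have := chi_bound [1] 1 one_pos {sqs (sh 0 : Fin N → ℕ) + 2 * N - 1} 1 zero_le_one h1
      (fun b hb => by simp [(chi_one_ne hN hb).2]) b
    simpa using this
  have h3 := chi_bound [1, 1] r hr _ 1 zero_le_one h2 (fun b hb => chi_two_ne hN hb) b
  refine h3.trans ?_
  rw [mul_one]
  exact_mod_cast Finset.card_le_two


/-! ### lower bound -/

noncomputable def FF {N : ℕ} (m : ℕ) (b : Fin N → ℕ) : ℤ :=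
  chi (List.replicate m 1 ++ [1, 1, 1, 1]) b + chi (List.replicate m 1 ++ [2, 1, 1]) b +
    chi (List.replicate m 1 ++ [2, 2]) b + chi (List.replicate m 1 ++ [3, 1]) b

lemma FF_succ {N : ℕ} (m : ℕ) (b : Fin N → ℕ) :
    FF (m + 1) b = ∑ i, if 1 ≤ b i then FF m (Function.update b i (b i - 1)) else 0 := by
  unfold FF
  simp only [List.replicate_succ, List.cons_append, chi]
  rw [← Finset.sum_add_distrib, ← Finset.sum_add_distrib, ← Finset.sum_add_distrib]
  refine Finset.sum_congr rfl fun i _ => ?_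
  split_ifs <;> simp

lemma FF_noninj {N : ℕ} (m : ℕ) (b : Fin N → ℕ) (hb : ¬ Function.Injective b) : FF m b = 0 := by
  simp [FF, chi_noninj _ b hb]

lemma FF_shift {N : ℕ} (m : ℕ) (b : Fin N → ℕ) (B : Fin (N + 1) → ℕ)
    (h0 : B (Fin.last N) = 0) (hB : ∀ i : Fin N, B i.castSucc = b i + 1) : FF m B = FF m b := by
  unfold FF
  rw [chi_shift _ _ b B h0 hB, chi_shift _ _ b B h0 hB, chi_shift _ _ b B h0 hB,
    chi_shift _ _ b B h0 hB] <;>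
  · intro r hr
    simp only [List.mem_append, List.mem_replicate, List.mem_cons, List.not_mem_nil] at hr
    rcases hr with hr | hr <;> grind

/-! explicit computation with five rows -/

def d1 (e : ℕ) : ℤ := if e = 0 then 1 else 0
def d2 (d e : ℕ) : ℤ := (if d = 1 then d1 e else 0) - (if e = 1 then d1 d else 0)
def d3 (c d e : ℕ) : ℤ := (if c = 2 then d2 d e else 0) - (if d = 2 then d2 c e else 0) +
  (if e = 2 then d2 c d else 0)
def d4 (b c d e : ℕ) : ℤ := (if b = 3 then d3 c d e else 0) - (if c = 3 then d3 b d e else 0) +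
  (if d = 3 then d3 b c e else 0) - (if e = 3 then d3 b c d else 0)
def d5 (a b c d e : ℕ) : ℤ := (if a = 4 then d4 b c d e else 0) - (if b = 4 then d4 a c d e else 0) +
  (if c = 4 then d4 a b d e else 0) - (if d = 4 then d4 a b c e else 0) +
  (if e = 4 then d4 a b c d else 0)

lemma cbase_laplace {N : ℕ} (b : Fin (N + 1) → ℕ) : cbase (sh 0) b =
    ∑ i : Fin (N + 1), (-1 : ℤ) ^ (i : ℕ) * (if b i = N then cbase (sh 0) (fun j => b (i.succAbove j)) else 0) := by
  unfold cbase
  rw [Matrix.det_succ_column_zero]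
  refine Finset.sum_congr rfl fun i _ => ?_
  have : (Matrix.of fun i j => if b i = (sh 0 : Fin (N + 1) → ℕ) j then (1 : ℤ) else 0).submatrix
      i.succAbove Fin.succ =
      Matrix.of fun k j => if b (i.succAbove k) = (sh 0 : Fin N → ℕ) j then (1 : ℤ) else 0 := by
    ext k j
    simp only [Matrix.submatrix_apply, Matrix.of_apply, sh, Pi.zero_apply, Fin.val_succ]
    refine if_congr ?_ rfl rfl
    omega
  rw [this]
  simp only [Matrix.of_apply, sh, Pi.zero_apply, Fin.val_zero]
  simp

lemma cb1 (b : Fin 1 → ℕ) : cbase (sh 0) b = d1 (b 0) := by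
  simp [cbase, d1, sh]
lemma cb2 (b : Fin 2 → ℕ) : cbase (sh 0) b = d2 (b 0) (b 1) := by
  rw [cbase_laplace, Fin.sum_univ_two, cb1, cb1]
  simp [d2, Fin.succAbove]
  split_ifs <;> ring
lemma cb3 (b : Fin 3 → ℕ) : cbase (sh 0) b = d3 (b 0) (b 1) (b 2) := by
  rw [cbase_laplace, Fin.sum_univ_three, cb2, cb2, cb2]
  simp [d3, Fin.succAbove, Fin.lt_def]
  split_ifs <;> ring
lemma cb4 (b : Fin 4 → ℕ) : cbase (sh 0) b = d4 (b 0) (b 1) (b 2) (b 3) := by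
  rw [cbase_laplace, Fin.sum_univ_four, cb3, cb3, cb3, cb3]
  simp [d4, Fin.succAbove, Fin.lt_def]
  split_ifs <;> ring
lemma cb5 (b : Fin 5 → ℕ) : cbase (sh 0) b = d5 (b 0) (b 1) (b 2) (b 3) (b 4) := by
  rw [cbase_laplace, Fin.sum_univ_five, cb4, cb4, cb4, cb4, cb4]
  simp [d5, Fin.succAbove, Fin.lt_def]
  split_ifs <;> ring

def c5 : List ℕ → ℕ → ℕ → ℕ → ℕ → ℕ → ℤ
  | [], a, b, c, d, e => d5 a b c d e
  | r :: l, a, b, c, d, e => (if r ≤ a then c5 l (a - r) b c d e else 0) +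
      (if r ≤ b then c5 l a (b - r) c d e else 0) + (if r ≤ c then c5 l a b (c - r) d e else 0) +
      (if r ≤ d then c5 l a b c (d - r) e else 0) + (if r ≤ e then c5 l a b c d (e - r) else 0)

lemma chi_c5 (l : List ℕ) : ∀ b : Fin 5 → ℕ, chi l b = c5 l (b 0) (b 1) (b 2) (b 3) (b 4) := by
  induction l with
  | nil => intro b; rw [chi, cb5]; rfl
  | cons r l ih =>
    intro b
    rw [chi, c5, Fin.sum_univ_five]
    simp only [ih]
    simp [Function.update]

def F5 (a b c d e : ℕ) : ℤ := c5 [1,1,1,1,1] a b c d e + c5 [1,2,1,1] a b c d e +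
  c5 [1,2,2] a b c d e + c5 [1,3,1] a b c d e

lemma FF_five (b : Fin 5 → ℕ) : FF 1 b = F5 (b 0) (b 1) (b 2) (b 3) (b 4) := by
  simp only [FF, F5, List.replicate_one, List.cons_append, List.nil_append, chi_c5]

lemma F5_bound0 : ∀ a b : Fin 10, b < a → ∀ c : Fin 10, c < b → ∀ d : Fin 10, d < c →
    ∀ e : Fin 10, e < d → a.1 + b.1 + c.1 + d.1 + e.1 = 15 →
    2 ≤ F5 a.1 b.1 c.1 d.1 e.1 := by
  decide +kernel

lemma F5_bound (a : ℕ) (ha : a < 10) (b : ℕ) (hb : b < a) (c : ℕ) (hc : c < b) (d : ℕ)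
    (hd : d < c) (e : ℕ) (he : e < d) (h : a + b + c + d + e = 15) : 2 ≤ F5 a b c d e :=
  F5_bound0 ⟨a, ha⟩ ⟨b, by omega⟩ hb ⟨c, by omega⟩ hc ⟨d, by omega⟩ hd ⟨e, by omega⟩ he h

lemma strictAnti_ge {N : ℕ} {b : Fin N → ℕ} (hb : StrictAnti b) (i : Fin N) :
    N - 1 - (i : ℕ) ≤ b i := by
  have key : ∀ k : ℕ, ∀ i : Fin N, N - 1 - (i : ℕ) = k → k ≤ b i := by
    intro k
    induction k with
    | zero => intros; omega
    | succ k ih =>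
      intro i hi
      have h1 : (i : ℕ) + 1 < N := by omega
      have h2 := ih ⟨i + 1, h1⟩ (by simp; omega)
      have h3 : b ⟨i + 1, h1⟩ < b i := hb (by simp [Fin.lt_def])
      omega
  exact key _ i rfl

lemma base_bound (N : ℕ) (hN : 5 ≤ N) : ∀ b : Fin N → ℕ, StrictAnti b →
    ∑ i, b i = ∑ i : Fin N, sh 0 i + 5 → 2 ≤ FF 1 b := by
  induction N, hN using Nat.le_induction with
  | base =>
    intro b hb hs
    rw [FF_five]
    simp [Fin.sum_univ_five, sh] at hs
    have h1 : b 1 < b 0 := hb (by decide)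
    have h2 : b 2 < b 1 := hb (by decide)
    have h3 : b 3 < b 2 := hb (by decide)
    have h4 : b 4 < b 3 := hb (by decide)
    exact F5_bound _ (by omega) _ h1 _ h2 _ h3 _ h4 (by omega)
  | succ N hN ih =>
    intro b hb hs
    have hge := strictAnti_ge hb
    have h0 : b (Fin.last N) = 0 := by
      by_contra hne
      have h1 : ∀ i : Fin (N + 1), sh 0 i + 1 ≤ b i := by
        have h2 : StrictAnti (fun i => b i - 1) := by
          intro i j hij
          have := hb hij
          have h4 : b (Fin.last N) ≤ b j := hb.antitone (Fin.le_last j)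
          simp only
          omega
        intro i
        have h5 := strictAnti_ge h2 i
        have h4 : b (Fin.last N) ≤ b i := hb.antitone (Fin.le_last i)
        simp only [sh, Pi.zero_apply]
        omega
      have h2 := Finset.sum_le_sum (fun i (_ : i ∈ (Finset.univ : Finset (Fin (N+1)))) => h1 i)
      rw [Finset.sum_add_distrib] at h2
      simp at h2
      omega
    have hpos : ∀ i : Fin N, 0 < b i.castSucc := fun i => by
      have := hb (Fin.castSucc_lt_last i); omega
    rw [FF_shift 1 (fun i => b i.castSucc - 1) b h0 (fun i => by have := hpos i; omega)]
    apply ih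
    · intro i j hij
      have := hb (Fin.castSucc_lt_castSucc_iff.2 hij)
      have := hpos j
      simp only
      omega
    · have e1 : ∑ i : Fin N, b i.castSucc = ∑ i : Fin N, (b i.castSucc - 1) + N := by
        rw [show (∑ i : Fin N, (b i.castSucc - 1) + N) = ∑ i : Fin N, ((b i.castSucc - 1) + 1) by
          rw [Finset.sum_add_distrib]; simp]
        exact Finset.sum_congr rfl fun i _ => by have := hpos i; omega
      have e2 : ∑ i : Fin N, (sh 0 : Fin (N + 1) → ℕ) i.castSucc = ∑ i : Fin N, (sh 0 : Fin N → ℕ) i + N := by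
        rw [show (∑ i : Fin N, (sh 0 : Fin N → ℕ) i + N) = ∑ i : Fin N, ((sh 0 : Fin N → ℕ) i + 1) by
          rw [Finset.sum_add_distrib]; simp]
        exact Finset.sum_congr rfl fun i _ => by simp [sh]; omega
      rw [Fin.sum_univ_castSucc, Fin.sum_univ_castSucc, h0, e1, e2] at hs
      simp [sh] at hs ⊢
      omega

lemma upd_anti {N : ℕ} {b : Fin N → ℕ} (hb : StrictAnti b) (i : Fin N) (hi : 1 ≤ b i)
    (hinj : Function.Injective (Function.update b i (b i - 1))) :
    StrictAnti (Function.update b i (b i - 1)) := by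
  intro j k hjk
  have h1 := hb hjk
  have hne := hinj.ne hjk.ne
  by_cases hj : j = i
  · subst hj
    rw [Function.update_self, Function.update_of_ne hjk.ne'] at hne ⊢
    omega
  · rw [Function.update_of_ne hj] at hne ⊢
    by_cases hk : k = i
    · subst hk
      rw [Function.update_self]
      omega
    · rw [Function.update_of_ne hk]; exact h1

lemma lower_bound {N : ℕ} (hN : 5 ≤ N) (m : ℕ) : ∀ b : Fin N → ℕ, StrictAnti b →
    ∑ i, b i = ∑ i : Fin N, sh 0 i + m + 5 → 2 ≤ FF (m + 1) b := by
  induction m with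
  | zero => exact base_bound N hN
  | succ m ih =>
    intro b hb hs
    have key : ∀ i, 1 ≤ b i → Function.Injective (Function.update b i (b i - 1)) →
        2 ≤ FF (m + 1) (Function.update b i (b i - 1)) := by
      intro i hi hinj
      apply ih _ (upd_anti hb i hi hinj)
      have := sum_update b i (b i - 1)
      omega
    have hex : ∃ i, sh 0 i < b i := by
      by_contra hcon
      push Not at hcon
      have := Finset.sum_le_sum (fun i (_ : i ∈ (Finset.univ : Finset (Fin N))) => hcon i)
      omega
    obtain ⟨i, hi, hmax⟩ : ∃ i, sh 0 i < b i ∧ ∀ j, i < j → b j ≤ sh 0 j := by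
      have hne : (Finset.univ.filter fun i : Fin N => sh 0 i < b i).Nonempty := by
        obtain ⟨i, hi⟩ := hex
        exact ⟨i, by simp [hi]⟩
      refine ⟨Finset.max' _ hne, ?_, ?_⟩
      · have := Finset.max'_mem _ hne
        simpa using this
      · intro j hj
        by_contra hcon
        have := Finset.le_max' _ j (by simpa using hcon : j ∈ (Finset.univ.filter fun i : Fin N => sh 0 i < b i))
        exact absurd hj (not_lt.2 this)
    have hinj : Function.Injective (Function.update b i (b i - 1)) := by
      intro j k hjk
      have aux : ∀ k, k ≠ i → b i - 1 ≠ b k := by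
        intro k hk h
        rcases lt_or_gt_of_ne hk with h1 | h1
        · have := hb h1; omega
        · have := hmax k h1
          have h2 : (i : ℕ) < k := h1
          simp only [sh, Pi.zero_apply] at hi this
          have := k.2
          omega
      by_cases hj : j = i
      · subst hj
        by_contra hk
        rw [Function.update_self, Function.update_of_ne (Ne.symm hk)] at hjk
        exact aux k (Ne.symm hk) hjk
      · rw [Function.update_of_ne hj] at hjk
        by_cases hk : k = i
        · subst hk
          rw [Function.update_self] at hjk
          exact absurd hjk.symm (aux j hj)
        · rw [Function.update_of_ne hk] at hjk
          exact hb.injective hjk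
    rw [FF_succ]
    refine le_trans ?_ (Finset.single_le_sum (f := fun i => if 1 ≤ b i then
      FF (m + 1) (Function.update b i (b i - 1)) else 0) ?_ (Finset.mem_univ i))
    · rw [if_pos (by omega)]
      exact key i (by omega) hinj
    · intro j _
      split_ifs with h
      · by_cases hj : Function.Injective (Function.update b j (b j - 1))
        · have := key j h hj; omega
        · rw [FF_noninj _ _ hj]
      · rfl


/-! ### expansion -/

noncomputable def bet (N : ℕ) {n : ℕ} (μ : Nat.Partition n) : Fin N → ℕ :=
  sh (fun i : Fin N => (sortedParts μ).getD i 0)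

lemma bet_strictAnti (N : ℕ) {n : ℕ} (μ : Nat.Partition n) : StrictAnti (bet N μ) := by
  intro i j hij
  have h1 : (sortedParts μ).getD j 0 ≤ (sortedParts μ).getD i 0 :=
    antitone_getD N _ (sortedParts_pairwise μ) hij.le
  have h2 : (i : ℕ) < j := hij
  have := j.2
  simp only [bet, sh]
  omega

lemma bet_sum {N n : ℕ} (hN : n ≤ N) (μ : Nat.Partition n) :
    ∑ i, bet N μ i = ∑ i : Fin N, sh 0 i + n := by
  have h := sum_getD N _ ((sortedParts_length μ).trans hN)
  rw [sortedParts_sum] at h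
  unfold bet
  simp only [sh, Pi.zero_apply, zero_add]
  rw [Finset.sum_add_distrib, h, add_comm]

lemma list_ext_getD {N : ℕ} {l l' : List ℕ} (hl : ∀ x ∈ l, 0 < x) (hl' : ∀ x ∈ l', 0 < x)
    (h1 : l.length ≤ N) (h2 : l'.length ≤ N) (h : ∀ i < N, l.getD i 0 = l'.getD i 0) : l = l' := by
  have key : ∀ l l' : List ℕ, (∀ x ∈ l', 0 < x) → l'.length ≤ N →
      (∀ i < N, l.getD i 0 = l'.getD i 0) → l'.length ≤ l.length := by
    intro l l' hp hlen hh
    by_contra hcon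
    push Not at hcon
    have h3 := hh l.length (by omega)
    rw [List.getD_eq_default _ _ le_rfl, List.getD_eq_getElem _ _ hcon] at h3
    have := hp _ (List.getElem_mem hcon)
    omega
  have hlen : l.length = l'.length :=
    le_antisymm (key l' l hl h1 fun i hi => (h i hi).symm) (key l l' hl' h2 h)
  refine List.ext_getElem hlen fun i hi hi' => ?_
  have := h i (by omega)
  rwa [List.getD_eq_getElem _ _ hi, List.getD_eq_getElem _ _ hi'] at this

lemma bet_inj {N n : ℕ} (hN : n ≤ N) {μ ν : Nat.Partition n} (h : bet N μ = bet N ν) : μ = ν := by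
  have h1 : sortedParts μ = sortedParts ν := by
    refine list_ext_getD (N := N) (sortedParts_pos μ) (sortedParts_pos ν)
      ((sortedParts_length μ).trans hN) ((sortedParts_length ν).trans hN) fun i hi => ?_
    have := congrFun h ⟨i, hi⟩
    simp only [bet, sh] at this
    omega
  apply Nat.Partition.ext
  rw [← sortedParts_coe, ← sortedParts_coe, h1]

lemma noninj_zero {N : ℕ} (H : (Fin N → ℕ) → ℤ)
    (hperm : ∀ (σ : Equiv.Perm (Fin N)) b, H (fun i => b (σ i)) = (Equiv.Perm.sign σ : ℤ) * H b)
    (b : Fin N → ℕ) (hb : ¬ Function.Injective b) : H b = 0 := by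
  simp only [Function.Injective] at hb
  push Not at hb
  obtain ⟨i, j, hij, hne⟩ := hb
  have h := hperm (Equiv.swap i j) b
  have h2 : (fun k => b (Equiv.swap i j k)) = b := by
    funext k
    by_cases h1 : k = i
    · subst h1; simp [hij]
    · by_cases h2 : k = j
      · subst h2; simp [hij]
      · rw [Equiv.swap_apply_of_ne_of_ne h1 h2]
  rw [h2, Equiv.Perm.sign_swap hne] at h
  push_cast at h
  linarith

lemma expand {N n : ℕ} (hN : n ≤ N) (H : (Fin N → ℕ) → ℤ)
    (hperm : ∀ (σ : Equiv.Perm (Fin N)) b, H (fun i => b (σ i)) = (Equiv.Perm.sign σ : ℤ) * H b)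
    (hsum : ∀ b, H b ≠ 0 → ∑ i, b i = ∑ i : Fin N, sh 0 i + n) (b : Fin N → ℕ) :
    H b = ∑ μ : Nat.Partition n, H (bet N μ) * cbase (bet N μ) b := by
  have main : ∀ b : Fin N → ℕ, Antitone b →
      H b = ∑ μ : Nat.Partition n, H (bet N μ) * cbase (bet N μ) b := by
    intro b hb
    by_cases hinj : Function.Injective b
    swap
    · rw [noninj_zero H hperm b hinj, Finset.sum_eq_zero]
      intro μ _
      rw [noninj_zero (cbase (bet N μ)) (fun σ b => cbase_perm _ b σ) b hinj, mul_zero]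
    have hst : StrictAnti b := hb.strictAnti_of_injective hinj
    by_cases hs : ∑ i, b i = ∑ i : Fin N, sh 0 i + n
    swap
    · rw [Finset.sum_eq_zero]
      · by_contra hne
        exact hs (hsum b hne)
      · intro μ _
        by_contra hne
        obtain ⟨σ, hσ⟩ := cbase_ne (right_ne_zero_of_mul hne)
        apply hs
        rw [← bet_sum hN μ, ← Equiv.sum_comp σ]
        exact Finset.sum_congr rfl fun i _ => hσ i
    have hge : ∀ i, sh 0 i ≤ b i := fun i => by
      have := strictAnti_ge hst i
      simpa [sh] using this
    have ha : Antitone fun i => b i - sh 0 i := by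
      have key : ∀ d : ℕ, ∀ i j : Fin N, (j : ℕ) = i + d → b j + d ≤ b i := by
        intro d
        induction d with
        | zero => 
          intro i j h
          have : i = j := Fin.ext (by omega)
          subst this; omega
        | succ d ih =>
          intro i j h
          have hj := j.2
          have h1 := ih i ⟨i + d, by omega⟩ rfl
          have h2 : b j < b ⟨i + d, by omega⟩ := hst (by simp [Fin.lt_def]; omega)
          omega
      intro i j hij
      have h1 : (i : ℕ) ≤ j := hij
      have h2 := key (j - i) i j (by omega)
      have := hge i
      have := hge j
      have := j.2
      simp only [sh, Pi.zero_apply] at *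
      omega
    have has : ∑ i, (b i - sh 0 i) = n := by
      have : ∑ i, (b i - sh 0 i) + ∑ i : Fin N, sh 0 i = ∑ i, b i := by
        rw [← Finset.sum_add_distrib]
        exact Finset.sum_congr rfl fun i _ => Nat.sub_add_cancel (hge i)
      omega
    let μ0 : Nat.Partition n :=
      Nat.Partition.ofSums n (Multiset.map (fun i => b i - sh 0 i) Finset.univ.val) has
    have hμ0 : bet N μ0 = b := by
      funext i
      have := sorted_eq (fun i => b i - sh 0 i) ha (sortedParts μ0) (sortedParts_pairwise μ0)
        (by rw [sortedParts_coe]; rfl) i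
      have h2 := hge i
      simp only [bet, sh, Pi.zero_apply] at *
      omega
    rw [Finset.sum_eq_single μ0]
    · rw [hμ0, cbase_self b hinj, mul_one]
    · intro μ _ hne
      by_contra hcon
      obtain ⟨σ, hσ⟩ := cbase_ne (right_ne_zero_of_mul hcon)
      apply hne
      apply bet_inj hN
      rw [hμ0]
      have h1 : b ∘ σ = b ∘ (1 : Equiv.Perm (Fin N)) := by
        apply Tuple.unique_antitone
        · have : b ∘ σ = bet N μ := funext hσ
          rw [this]
          exact (bet_strictAnti N μ).antitone
        · exact hb
      rw [← funext hσ]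
      exact h1
    · intro h; exact absurd (Finset.mem_univ _) h
  obtain ⟨σ, hσ⟩ := exists_sort b
  have h := main _ hσ
  rw [hperm] at h
  simp only [cbase_perm, mul_left_comm _ (Equiv.Perm.sign σ : ℤ)] at h
  rw [← Finset.mul_sum] at h
  exact mul_left_cancel₀ (by simp) h

lemma expand_poly {N n : ℕ} (hN : n ≤ N) (H : (Fin N → ℕ) → ℤ)
    (hperm : ∀ (σ : Equiv.Perm (Fin N)) b, H (fun i => b (σ i)) = (Equiv.Perm.sign σ : ℤ) * H b)
    (hsum : ∀ b, H b ≠ 0 → ∑ i, b i = ∑ i : Fin N, sh 0 i + n) (P : MvPolynomial (Fin N) ℤ)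
    (hP : ∀ b, coeff (Finsupp.equivFunOnFinite.symm b)
      (alt (sh 0) (X : Fin N → MvPolynomial (Fin N) ℤ) * P) = H b) :
    P = ∑ μ : Nat.Partition n, H (bet N μ) • schurP N n (sortedParts μ) := by
  apply mul_left_cancel₀ (alt_ne_zero N)
  have h1 : ∀ μ : Nat.Partition n, alt (sh 0) (X : Fin N → MvPolynomial (Fin N) ℤ) *
      schurP N n (sortedParts μ) = alt (bet N μ) X := by
    intro μ
    rw [schurP_eq hN _ (sortedParts_pairwise μ) ((sortedParts_length μ).trans hN)
      (sortedParts_sum μ), ← alt_eq]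
    · rfl
    · exact antitone_getD N _ (sortedParts_pairwise μ)
  rw [Finset.mul_sum]
  simp only [mul_smul_comm, h1]
  ext b
  obtain ⟨b, rfl⟩ := Finsupp.equivFunOnFinite.symm.surjective b
  rw [hP, expand hN H hperm hsum b, coeff_sum]
  refine Finset.sum_congr rfl fun μ _ => ?_
  rw [coeff_smul, coeff_alt, smul_eq_mul]

noncomputable def HH {N : ℕ} (n : ℕ) (b : Fin N → ℕ) : ℤ :=
  chi (List.replicate n 1) b + chi (2 :: List.replicate (n - 2) 1) b +
    chi (2 :: 2 :: List.replicate (n - 4) 1) b + chi (3 :: List.replicate (n - 3) 1) b +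
    chi [n - 2, 1, 1] b

lemma HH_perm {N n : ℕ} (σ : Equiv.Perm (Fin N)) (b : Fin N → ℕ) :
    HH n (fun i => b (σ i)) = (Equiv.Perm.sign σ : ℤ) * HH n b := by
  unfold HH
  simp only [chi_perm]
  ring

lemma HH_sum {N n : ℕ} (hn : 9 ≤ n) (b : Fin N → ℕ) (h : HH n b ≠ 0) :
    ∑ i, b i = ∑ i : Fin N, sh 0 i + n := by
  by_contra hne
  apply h
  have key : ∀ l : List ℕ, l.sum = n → chi l b = 0 := by
    intro l hl
    by_contra hc
    exact hne (hl ▸ chi_sum l b hc)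
  unfold HH
  rw [key, key, key, key, key]
  · rfl
  all_goals simp
  all_goals omega

lemma HH_bet {N n : ℕ} (hn : 9 ≤ n) (hN : n ≤ N) (μ : Nat.Partition n) :
    HH n (bet N μ) = HH n (bet n μ) := by
  induction N, hN using Nat.le_induction with
  | base => rfl
  | succ N hN ih =>
    rw [← ih]
    have h0 : bet (N + 1) μ (Fin.last N) = 0 := by
      simp only [bet, sh, Fin.val_last]
      rw [List.getD_eq_default _ _ ((sortedParts_length μ).trans hN)]
      omega
    have hB : ∀ i : Fin N, bet (N + 1) μ i.castSucc = bet N μ i + 1 := by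
      intro i
      simp only [bet, sh, Fin.val_castSucc]
      omega
    have key : ∀ l : List ℕ, (∀ r ∈ l, 0 < r) → chi l (bet (N + 1) μ) = chi l (bet N μ) :=
      fun l hl => chi_shift l hl _ _ h0 hB
    unfold HH
    rw [key, key, key, key, key]
    all_goals
      intro r hr
      simp only [List.mem_replicate, List.mem_cons, List.not_mem_nil] at hr
      grind

lemma HH_nonneg {n : ℕ} (hn : 9 ≤ n) (μ : Nat.Partition n) : 0 ≤ HH n (bet n μ) := by
  have h1 := chi_upper (N := n) (by omega) (n - 2) (by omega) (bet n μ)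
  have h2 := lower_bound (N := n) (by omega) (n - 5) (bet n μ) (bet_strictAnti n μ)
    (by rw [bet_sum le_rfl]; omega)
  have e : n - 5 + 1 = n - 4 := by omega
  rw [e] at h2
  have p1 : List.replicate (n - 4) 1 ++ [1, 1, 1, 1] = List.replicate n 1 := by
    rw [show [1, 1, 1, 1] = List.replicate 4 1 from rfl, List.replicate_append_replicate]
    congr 1; omega
  have p2 : (List.replicate (n - 4) 1 ++ [2, 1, 1]).Perm (2 :: List.replicate (n - 2) 1) := by
    refine List.perm_middle.trans ?_
    rw [show [1, 1] = List.replicate 2 1 from rfl, List.replicate_append_replicate,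
      show n - 4 + 2 = n - 2 by omega]
  have p3 : (List.replicate (n - 4) 1 ++ [2, 2]).Perm (2 :: 2 :: List.replicate (n - 4) 1) :=
    List.perm_append_comm
  have p4 : (List.replicate (n - 4) 1 ++ [3, 1]).Perm (3 :: List.replicate (n - 3) 1) := by
    refine List.perm_middle.trans ?_
    rw [show [1] = List.replicate 1 1 from rfl, List.replicate_append_replicate,
      show n - 4 + 1 = n - 3 by omega]
  unfold FF at h2
  rw [p1, chi_congr_perm p2, chi_congr_perm p3, chi_congr_perm p4] at h2
  unfold HH
  have := (abs_le.1 h1).1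
  linarith

/-- For `n ≥ 9`, the symmetric function
`p_{(1^n)} + p_{(2,1^{n-2})} + p_{(2,2,1^{n-4})} + p_{(3,1^{n-3})} + p_{(n-2,1,1)}`
is Schur-positive. -/
theorem schur_positive_interval_hook (n : ℕ) (hn : 9 ≤ n) :
    ∃ c : Nat.Partition n → ℕ, ∀ N, n ≤ N →
      powerSum N (List.replicate n 1) + powerSum N (2 :: List.replicate (n - 2) 1) +
          powerSum N (2 :: 2 :: List.replicate (n - 4) 1) +
          powerSum N (3 :: List.replicate (n - 3) 1) + powerSum N [n - 2, 1, 1] =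
        ∑ μ : Nat.Partition n, (c μ : ℤ) • schurP N n (sortedParts μ) := by

  refine ⟨fun μ => (HH n (bet n μ)).toNat, fun N hN => ?_⟩
  refine (expand_poly hN (HH n) (fun σ b => HH_perm σ b) (fun b hb => HH_sum hn b hb) _ (fun b => ?_)).trans ?_
  · simp only [mul_add, coeff_add, coeff_chi]
    rfl
  · refine Finset.sum_congr rfl fun μ _ => ?_
    rw [Int.toNat_of_nonneg (HH_nonneg hn μ), HH_bet hn hN]
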